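/- arXiv:math/0201003 — 3 statements merged into one kernel-verified Lean document; each statement's English description precedes it below -/
import Mathlib

section
/- (Sign Decomposition Theorem) Let k ≥ 2, let λ be a partition with empty k-core, let μ be a partition of p := |λ|/k, and let T ∈ RHT_{kμ}^λ. If ω_{kμ}^λ(T) = (T_1,…,T_k), then sign(π_T) = sign(π_λ) · sign(π_{T_1}) ··· sign(π_{T_k}). -/
open scoped BigOperators

namespace RimHookPaper

/-- A partition: a weakly decreasing, eventually-zero sequence of naturals;
`parts n` is the `(n+1)`-st part. -/
structure Partition : Type where
  parts : ℕ → ℕ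
  antitone : ∀ ⦃i j : ℕ⦄, i ≤ j → parts j ≤ parts i
  eventually_zero : ∃ N : ℕ, ∀ i : ℕ, N ≤ i → parts i = 0

namespace Partition

/-- The size `|λ|` of a partition. -/
noncomputable def size (P : Partition) : ℕ := ∑ᶠ i, P.parts i

/-- The empty partition. -/
def empty : Partition := ⟨fun _ => 0, fun _ _ _ => le_rfl, ⟨0, fun _ _ => rfl⟩⟩

/-- The number of nonzero parts of a partition. -/
noncomputable def length (P : Partition) : ℕ := sInf {N | P.parts N = 0}

/-- The cells of the Young diagram of a partition. -/
def cells (P : Partition) : Set (ℕ × ℕ) := {c | c.2 < P.parts c.1}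

instance : LE Partition := ⟨fun Q P => ∀ i, Q.parts i ≤ P.parts i⟩

/-- The skew shape `P / Q` (as a set of cells). -/
def skew (P Q : Partition) : Set (ℕ × ℕ) := P.cells \ Q.cells

end Partition

/-- Edge-adjacency of cells. -/
def Adj (c d : ℕ × ℕ) : Prop :=
  (c.1 = d.1 ∧ (c.2 + 1 = d.2 ∨ d.2 + 1 = c.2)) ∨
    (c.2 = d.2 ∧ (c.1 + 1 = d.1 ∨ d.1 + 1 = c.1))

/-- A set of cells is (edge-)connected. -/
def IsConnectedSet (S : Set (ℕ × ℕ)) : Prop :=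
  ∀ c ∈ S, ∀ d ∈ S, Relation.ReflTransGen (fun x y => x ∈ S ∧ y ∈ S ∧ Adj x y) c d

/-- `S` contains no 2×2 square. -/
def NoSquare (S : Set (ℕ × ℕ)) : Prop :=
  ¬ ∃ i j : ℕ, (i, j) ∈ S ∧ (i + 1, j) ∈ S ∧ (i, j + 1) ∈ S ∧ (i + 1, j + 1) ∈ S

/-- `P / Q` is a rim hook (border strip) of length `t`: a nonempty connected skew
shape with no 2×2 square, consisting of `t` boxes. -/
def IsRimHook (P Q : Partition) (t : ℕ) : Prop :=
  Q ≤ P ∧ (P.skew Q).Nonempty ∧ IsConnectedSet (P.skew Q) ∧ NoSquare (P.skew Q) ∧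
    (P.skew Q).ncard = t

/-- One step of a rim hook tableau: an empty hook (`t = 0`) or a rim hook of length `t`. -/
def IsStep (P Q : Partition) (t : ℕ) : Prop :=
  (t = 0 ∧ P = Q) ∨ (0 < t ∧ IsRimHook P Q t)

/-- Number of rows met by a set of cells. -/
noncomputable def rowCount (S : Set (ℕ × ℕ)) : ℕ := (Prod.fst '' S).ncard

/-- A rim hook tableau of shape `P` and type `μ`: a chain
`∅ = λ⁰ ⊆ λ¹ ⊆ ⋯ ⊆ λʳ = P` with each `λⁱ/λⁱ⁻¹` a (possibly empty)
rim hook of length `μᵢ`. -/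
structure RHT (P : Partition) (μ : List ℕ) : Type where
  chain : Fin (μ.length + 1) → Partition
  chain_zero : chain 0 = Partition.empty
  chain_last : chain (Fin.last μ.length) = P
  step : ∀ j : Fin μ.length, IsStep (chain j.succ) (chain j.castSucc) (μ.get j)

/-- The total height of a rim hook tableau: the sum of the heights
(number of rows minus one) of its nonempty rim hooks. -/
noncomputable def RHT.height {P : Partition} {μ : List ℕ} (T : RHT P μ) : ℕ :=
  ∑ j : Fin μ.length, (rowCount ((T.chain j.succ).skew (T.chain j.castSucc)) - 1)

/-- The character value `χ^λ_μ` of the symmetric group, via the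
Murnaghan–Nakayama rule. -/
noncomputable def chiAux (P : Partition) (μ : List ℕ) : ℤ :=
  ∑ᶠ T : RHT P μ, (-1 : ℤ) ^ T.height

/-- The parts of a multiset, listed in weakly decreasing order. -/
def typeList (μ : Multiset ℕ) : List ℕ := (μ.sort (· ≤ ·)).reverse

/-- `χ^λ_μ` for a multiset type `μ`. -/
noncomputable def chi (P : Partition) (μ : Multiset ℕ) : ℤ := chiAux P (typeList μ)

/-- `z_μ = ∏_j m_j! · j^{m_j}` where `μ` has `m_j` parts equal to `j`. -/
def zpart (μ : Multiset ℕ) : ℕ := μ.prod * ∏ j ∈ μ.toFinset, (μ.count j).factorial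

/-- `χ^λ(σ)`: the character evaluated at a permutation, via its full cycle type
(including fixed points as parts equal to 1). -/
noncomputable def chiPerm (P : Partition) {m : ℕ} (σ : Equiv.Perm (Fin m)) : ℤ :=
  chi P (σ.cycleType + Multiset.replicate (m - σ.cycleType.sum) 1)

/-- Position of the zero (up step) corresponding to row `n` in the 0/1 sequence
`s(P)`, where the median of `s(P)` is the gap just below position `0`. -/
def zpos (P : Partition) (n : ℕ) : ℤ := (P.parts n : ℤ) - (n : ℤ) - 1

/-- `s(P)` has a `0` (an up step) at position `x`; otherwise it has a `1`. -/
def isZeroAt (P : Partition) (x : ℤ) : Prop := ∃ n : ℕ, zpos P n = x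

/-- `Q` is the `k`-quotient of `P`: for each residue `i`, the 0/1 sequence of `Q i`
is (up to the shift `d` recording the position of its median) the subsequence of
`s(P)` consisting of every `k`-th digit, including the `(i+1)`-st digit after the
median of `s(P)`. -/
def IsKQuotient (k : ℕ) (P : Partition) (Q : Fin k → Partition) : Prop :=
  ∀ i : Fin k, ∃ d : ℤ, ∀ j : ℤ,
    isZeroAt (Q i) j ↔ isZeroAt P (((i : ℕ) : ℤ) + (j + d) * (k : ℤ))

/-- `C` is the `k`-core of `P`: it is obtained from `P` by successively removing
rim hooks of length `k`, as long as possible. -/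
def IsKCore (k : ℕ) (P C : Partition) : Prop :=
  Relation.ReflTransGen (fun A B => IsRimHook A B k) P C ∧ ¬ ∃ C', IsRimHook C C' k

/-- The map on row indices induced by moving the zero in row `m` down (left)
to row `m'`, the zeros in rows `m+1,…,m'` each moving up one row. -/
def cycleFun (m m' n : ℕ) : ℕ :=
  if n = m then m' else if m < n ∧ n ≤ m' then n - 1 else n

/-- One tracking step for the zero permutation: passing from `A` to `B` by removing
a rim hook, encoded on the 0/1 sequence as interchanging a `1` with a later `0`
(the moved zero, in row `m` of `A`, jumps over `m' - m` zeros, landing in row `m'`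
of `B`); the row of each labeled zero is updated by `cycleFun m m'`. -/
def StepTrack (A B : Partition) (f g : ℕ → ℕ) : Prop :=
  (A = B ∧ g = f) ∨
    ∃ m m' : ℕ, m ≤ m' ∧
      (∀ n, n < m → zpos B n = zpos A n) ∧
      (∀ n, m ≤ n → n < m' → zpos B n = zpos A (n + 1)) ∧
      (∀ n, m' < n → zpos B n = zpos A n) ∧
      g = fun i => cycleFun m m' (f i)

/-- `π` is the zero permutation of the rim hook tableau `T`: label the zeros of
`s(P)` succeeding the first one by `1,…,ℓ(P)` from left to right (`q j i` is the
row of label `i+1` at stage `j` of the peeling, rows counted from the top), peel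
the rim hooks of `T` in order of decreasing entries, and read off the labels in
the final sequence `s(∅)` from left to right. -/
def IsZeroPerm {P : Partition} {μ : List ℕ} (T : RHT P μ)
    (π : Equiv.Perm (Fin P.length)) : Prop :=
  ∃ q : Fin (μ.length + 1) → ℕ → ℕ,
    (∀ i : ℕ, i < P.length → q (Fin.last μ.length) i = P.length - 1 - i) ∧
    (∀ j : Fin μ.length,
      StepTrack (T.chain j.succ) (T.chain j.castSucc) (q j.succ) (q j.castSucc)) ∧
    (∀ i : Fin P.length, q 0 ((π i : ℕ)) = P.length - 1 - (i : ℕ))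

/-- `ω(T) = (T₁,…,T_k)`: the rim hook tableau `T` (all of whose hook lengths are
divisible by `k`) decomposes into the `k`-tuple of rim hook tableaux `Ti` on the
`k`-quotient: each step of `T`, removing a hook of length `k·t`, affects exactly
one subsequence (mod `k`) of the 0/1 sequence, i.e. removes a hook of length `t`
from exactly one of the quotient partitions. -/
def OmegaRel (k : ℕ) {P : Partition} {κ : List ℕ} (T : RHT P κ)
    {Q : Fin k → Partition} {ν : Fin k → List ℕ}
    (Ti : ∀ i : Fin k, RHT (Q i) (ν i)) : Prop :=
  ∃ (QC : Fin (κ.length + 1) → Fin k → Partition) (a : Fin κ.length → Fin k),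
    (∀ j, IsKQuotient k (T.chain j) (QC j)) ∧
    (∀ j : Fin κ.length, ∀ i, i ≠ a j → QC j.castSucc i = QC j.succ i) ∧
    (∀ j : Fin κ.length, ∃ t : ℕ, κ.get j = k * t ∧
      IsStep (QC j.succ (a j)) (QC j.castSucc (a j)) t) ∧
    (∀ i : Fin k, ∃ e : Fin (ν i).length → Fin κ.length,
      StrictMono e ∧ (∀ s, a (e s) = i) ∧ (∀ j, a j = i → ∃ s, e s = j) ∧
      (∀ s, k * (ν i).get s = κ.get (e s)) ∧
      (Ti i).chain 0 = QC 0 i ∧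
      (∀ s : Fin (ν i).length, (Ti i).chain s.succ = QC (Fin.succ (e s)) i))

/-! ### Helper material -/

/-- The set of zeros. -/
def ZS (P : Partition) : Set ℤ := {x | isZeroAt P x}

/-- `S'` arises from `S` by moving `x` to `y`. -/
structure Move (S S' : Set ℤ) (x y : ℤ) : Prop where
  hx : x ∈ S
  hx' : x ∉ S'
  hy : y ∉ S
  hy' : y ∈ S'
  ho : ∀ z, z ≠ x → z ≠ y → (z ∈ S ↔ z ∈ S')

/-- Number of elements jumped over. -/
noncomputable def HH (S S' : Set ℤ) : ℕ :=
  {z | z ∈ S ∧ ∃ x, x ∈ S ∧ x ∉ S' ∧ ∃ y, y ∉ S ∧ y ∈ S' ∧ y < z ∧ z < x}.ncard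

theorem HH_self (S : Set ℤ) : HH S S = 0 := by
  unfold HH
  have : {z | z ∈ S ∧ ∃ x, x ∈ S ∧ x ∉ S ∧ ∃ y, y ∉ S ∧ y ∈ S ∧ y < z ∧ z < x} = ∅ := by
    ext z; simp; tauto
  rw [this]; simp

theorem Move.HH_eq {S S' : Set ℤ} {x y : ℤ} (h : Move S S' x y) :
    HH S S' = {z | z ∈ S ∧ y < z ∧ z < x}.ncard := by
  unfold HH
  congr 1
  ext z
  simp only [Set.mem_ofPred_eq]
  constructor
  · rintro ⟨hz, u, hu, hu', v, hv, hv', h1, h2⟩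
    have e1 : u = x := by
      by_contra hne
      by_cases huy : u = y
      · exact h.hy (huy ▸ hu)
      · exact hu' ((h.ho u hne huy).1 hu)
    have e2 : v = y := by
      by_contra hne
      by_cases hvx : v = x
      · exact hv (hvx ▸ h.hx)
      · exact hv ((h.ho v hvx hne).2 hv')
    subst e1 e2
    exact ⟨hz, h1, h2⟩
  · rintro ⟨hz, h1, h2⟩
    exact ⟨hz, x, h.hx, h.hx', y, h.hy, h.hy', h1, h2⟩

theorem zpos_lt (P : Partition) {m n : ℕ} (h : m < n) : zpos P n < zpos P m := by
  have := P.antitone h.le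
  unfold zpos; omega

theorem zpos_lt_iff (P : Partition) {m n : ℕ} : zpos P n < zpos P m ↔ m < n := by
  constructor
  · intro h
    by_contra hc
    rcases Nat.lt_or_ge n m with h1 | h1
    · have := zpos_lt P h1; omega
    · have : m = n := by omega
      subst this; omega
  · exact zpos_lt P

theorem zpos_inj (P : Partition) : Function.Injective (zpos P) := by
  intro m n h
  rcases lt_trichotomy m n with h1 | h1 | h1
  · have := zpos_lt P h1; omega
  · exact h1
  · have := zpos_lt P h1; omega

theorem parts_length (P : Partition) : P.parts P.length = 0 := by
  obtain ⟨N, hN⟩ := P.eventually_zero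
  exact Nat.sInf_mem (s := {N | P.parts N = 0}) ⟨N, hN N le_rfl⟩

theorem parts_of_length_le (P : Partition) {n : ℕ} (h : P.length ≤ n) : P.parts n = 0 := by
  have := P.antitone h
  rw [parts_length] at this; omega

theorem ext_zpos {A B : Partition} (h : ∀ n, zpos B n = zpos A n) : A = B := by
  cases A with
  | mk a _ _ => cases B with
    | mk b _ _ =>
      have : a = b := by
        funext n
        have := h n
        simp only [zpos] at this; omega
      subst this; rfl

/-- The common analysis of a tracking step. -/
theorem stepTrack_cases {A B : Partition} {f g : ℕ → ℕ} (h : StepTrack A B f g) (hBA : B ≤ A)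
    {L : ℕ} (hL : ∀ n, L ≤ n → A.parts n = 0) :
    (A = B ∧ g = f) ∨ ∃ m m' : ℕ, m ≤ m' ∧ m' < L ∧ g = (fun i => cycleFun m m' (f i)) ∧
      HH (ZS A) (ZS B) = m' - m ∧ zpos B m' < zpos A m ∧
      Move (ZS A) (ZS B) (zpos A m) (zpos B m') ∧ -(L : ℤ) ≤ zpos B m' ∧
      ∀ N, m' < N → ∑ n ∈ Finset.range N, (zpos A n - zpos B n) = zpos A m - zpos B m' := by
  by_cases hAB : A = B
  · left
    refine ⟨hAB, ?_⟩
    rcases h with ⟨-, h⟩ | ⟨m, m', hm, h1, h2, h3, hg⟩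
    · exact h
    · subst hAB
      have : m = m' := by
        by_contra hne
        have a1 := h2 m le_rfl (by omega)
        have a2 := zpos_lt A (Nat.lt_succ_self m)
        simp only [Nat.succ_eq_add_one] at a2
        omega
      subst this
      rw [hg]
      funext i
      unfold cycleFun
      split_ifs <;> omega
  · right
    rcases h with ⟨h, -⟩ | ⟨m, m', hm, h1, h2, h3, hg⟩
    · exact absurd h hAB
    have hle : ∀ n, zpos B n ≤ zpos A n := fun n => by
      have : B.parts n ≤ A.parts n := hBA n
      unfold zpos; omega
    have hne : zpos B m' ≠ zpos A m' := by
      intro he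
      rcases Nat.lt_or_ge m m' with hlt | hge
      · have a1 := h2 (m' - 1) (by omega) (by omega)
        have a2 := zpos_lt B (show m' - 1 < m' by omega)
        rw [show m' - 1 + 1 = m' by omega] at a1
        omega
      · have : m = m' := by omega
        subst this
        apply hAB
        apply ext_zpos
        intro n
        rcases lt_trichotomy n m with h | h | h
        · exact h1 n h
        · rw [h, he]
        · exact h3 n h
    have hlt : zpos B m' < zpos A m' := lt_of_le_of_ne (hle m') hne
    have hAm : zpos A m' ≤ zpos A m := by
      rcases hm.lt_or_eq with h | h
      · exact (zpos_lt A h).le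
      · rw [h]
    have hm'L : m' < L := by
      by_contra hc
      have a1 := hL m' (by omega)
      have a2 : B.parts m' ≤ A.parts m' := hBA m'
      unfold zpos at hlt; omega
    have hy : zpos B m' ∉ ZS A := by
      rintro ⟨n, hn⟩
      have : m' < n := (zpos_lt_iff A).1 (by omega)
      have a := h3 n this
      have := zpos_lt B this
      omega
    have hx : zpos A m ∉ ZS B := by
      rintro ⟨n, hn⟩
      rcases lt_trichotomy n m' with h | h | h
      · rcases Nat.lt_or_ge n m with h' | h'
        · rw [h1 n h'] at hn
          have := zpos_inj A hn; omega
        · rw [h2 n h' h] at hn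
          have := zpos_inj A hn; omega
      · subst h; omega
      · rw [h3 n h] at hn
        have := zpos_inj A hn; omega
    have hmove : Move (ZS A) (ZS B) (zpos A m) (zpos B m') := by
      refine ⟨⟨m, rfl⟩, hx, hy, ⟨m', rfl⟩, ?_⟩
      intro z hzx hzy
      constructor
      · rintro ⟨n, rfl⟩
        have hnm : n ≠ m := fun h => hzx (by rw [h])
        rcases Nat.lt_or_ge m' n with h | h
        · exact ⟨n, h3 n h⟩
        · rcases Nat.lt_or_ge n m with h' | h'
          · exact ⟨n, h1 n h'⟩
          · refine ⟨n - 1, ?_⟩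
            rw [h2 (n-1) (by omega) (by omega), show n - 1 + 1 = n by omega]
      · rintro ⟨n, rfl⟩
        have hnm : n ≠ m' := fun h => hzy (by rw [h])
        rcases Nat.lt_or_ge m' n with h | h
        · exact ⟨n, (h3 n h).symm⟩
        · rcases Nat.lt_or_ge n m with h' | h'
          · exact ⟨n, (h1 n h').symm⟩
          · exact ⟨n + 1, (h2 n h' (by omega)).symm⟩
    refine ⟨m, m', hm, hm'L, hg, ?_, by omega, hmove, ?_, ?_⟩
    · rw [hmove.HH_eq]
      have : {z | z ∈ ZS A ∧ zpos B m' < z ∧ z < zpos A m} =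
          zpos A '' (Finset.Ioc m m' : Set ℕ) := by
        ext z
        simp only [Set.mem_ofPred_eq, Set.mem_image, Finset.coe_Ioc, Set.mem_Ioc]
        constructor
        · rintro ⟨⟨n, rfl⟩, a1, a2⟩
          refine ⟨n, ⟨(zpos_lt_iff A).1 a2, ?_⟩, rfl⟩
          by_contra hc
          have b1 := h3 n (by omega)
          have b2 := zpos_lt B (show m' < n by omega)
          omega
        · rintro ⟨n, ⟨a1, a2⟩, rfl⟩
          refine ⟨⟨n, rfl⟩, ?_, zpos_lt A a1⟩
          rcases a2.lt_or_eq with h | h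
          · have := zpos_lt A h; omega
          · rw [h]; exact hlt
      rw [this, Set.ncard_image_of_injective _ (zpos_inj A), Set.ncard_coe_finset, Nat.card_Ioc]
    · unfold zpos; omega
    · intro N hN
      have e1 : ∑ n ∈ Finset.range N, (zpos A n - zpos B n) =
          ∑ n ∈ Finset.Ico m (m' + 1), (zpos A n - zpos B n) := by
        symm
        apply Finset.sum_subset
        · intro n hn; simp at hn ⊢; omega
        · intro n hn hn'
          simp at hn hn'
          rcases Nat.lt_or_ge n m with h | h
          · rw [h1 n h]; ring
          · rw [h3 n (by omega)]; ring
      rw [e1, Finset.sum_sub_distrib, Finset.sum_eq_sum_Ico_succ_bot (by omega),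
        Finset.sum_Ico_succ_top hm, ← Finset.sum_Ico_add' (fun n => zpos A n) m m' 1]
      have e2 : ∑ n ∈ Finset.Ico m m', zpos B n = ∑ n ∈ Finset.Ico m m', zpos A (n + 1) := by
        apply Finset.sum_congr rfl
        intro n hn
        simp at hn
        exact h2 n hn.1 hn.2
      rw [e2]; ring

theorem skew_ncard {A B : Partition} (hBA : B ≤ A) {L : ℕ} (hL : ∀ n, L ≤ n → A.parts n = 0) :
    ((A.skew B).ncard : ℤ) = ∑ n ∈ Finset.range L, (zpos A n - zpos B n) := by
  have : A.skew B =
      (((Finset.range L).sigma fun n => Finset.Ico (B.parts n) (A.parts n)).image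
        (fun s : (_ : ℕ) × ℕ => (s.1, s.2)) : Finset (ℕ × ℕ)) := by
    ext ⟨i, j⟩
    simp only [Partition.skew, Partition.cells, Set.mem_sdiff, Set.mem_ofPred_eq, Finset.coe_image,
      Set.mem_image, Finset.mem_coe, Finset.mem_sigma, Finset.mem_range, Finset.mem_Ico,
      Prod.mk.injEq]
    constructor
    · rintro ⟨a, b⟩
      refine ⟨⟨i, j⟩, ⟨?_, by simp; omega⟩, rfl, rfl⟩
      by_contra hc
      have := hL i (by simpa using hc)
      omega
    · rintro ⟨⟨i', j'⟩, ⟨a, b⟩, rfl, rfl⟩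
      simp at b ⊢; omega
  rw [this, Set.ncard_coe_finset, Finset.card_image_of_injective, Finset.card_sigma]
  · push_cast
    apply Finset.sum_congr rfl
    intro n _
    have : B.parts n ≤ A.parts n := hBA n
    rw [Nat.card_Ico]
    unfold zpos; omega
  · rintro ⟨a, b⟩ ⟨c, d⟩ h
    simp at h
    obtain ⟨rfl, rfl⟩ := h
    rfl

theorem step_le {A B : Partition} {t : ℕ} (h : IsStep A B t) : B ≤ A := by
  rcases h with ⟨-, rfl⟩ | ⟨-, h⟩
  · exact fun i => le_rfl
  · exact h.1

theorem step_ncard {A B : Partition} {t : ℕ} (h : IsStep A B t) : (A.skew B).ncard = t := by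
  rcases h with ⟨rfl, rfl⟩ | ⟨-, h⟩
  · simp [Partition.skew]
  · exact h.2.2.2.2

theorem chain_le {P : Partition} {μ : List ℕ} (T : RHT P μ) (j : Fin (μ.length + 1)) :
    T.chain j ≤ P := by
  induction j using Fin.reverseInduction with
  | last => rw [T.chain_last]; exact fun i => le_rfl
  | cast j ih => exact fun i => (step_le (T.step j) i).trans (ih i)

theorem chain_parts {P : Partition} {μ : List ℕ} (T : RHT P μ) (j : Fin (μ.length + 1))
    {n : ℕ} (h : P.length ≤ n) : (T.chain j).parts n = 0 := by
  have := chain_le T j n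
  rw [parts_of_length_le P h] at this; omega

/-- The downward cycle as a permutation. -/
theorem exists_cyc {L m m' : ℕ} (h : m ≤ m') (h' : m' < L) :
    ∃ c : Equiv.Perm (Fin L), (∀ i : Fin L, (c i : ℕ) = cycleFun m m' i) ∧
      Equiv.Perm.sign c = (-1) ^ (m' - m) := by
  have : NeZero L := ⟨by omega⟩
  let a : Fin L := ⟨m, by omega⟩
  let b : Fin L := ⟨m', h'⟩
  have hab : a ≤ b := h
  refine ⟨(Fin.cycleIcc a b)⁻¹, ?_, ?_⟩
  · intro i
    have key : ∀ w : Fin L, (w : ℕ) = cycleFun m m' i → (Fin.cycleIcc a b)⁻¹ i = w → 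
      (((Fin.cycleIcc a b)⁻¹ i : Fin L) : ℕ) = cycleFun m m' i := by
      intro w h1 h2; rw [h2, h1]
    by_cases h1 : (i : ℕ) = m
    · refine key b ?_ ?_
      · simp [cycleFun, h1, b]
      · rw [Equiv.Perm.inv_eq_iff_eq, Fin.cycleIcc_of_last hab]
        exact Fin.ext h1
    · by_cases h2 : m < (i : ℕ) ∧ (i : ℕ) ≤ m'
      · refine key ⟨i - 1, by omega⟩ ?_ ?_
        · simp [cycleFun, h1, h2]
        · rw [Equiv.Perm.inv_eq_iff_eq, Fin.cycleIcc_of_ge_of_lt]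
          · apply Fin.ext
            rw [Fin.val_add_one_of_lt']
            · simp; omega
            · simp; omega
          · show m ≤ (i : ℕ) - 1
            omega
          · show (i : ℕ) - 1 < m'
            omega
      · refine key i ?_ ?_
        · simp [cycleFun, h1, h2]
        · rw [Equiv.Perm.inv_eq_iff_eq]
          rcases Nat.lt_or_ge i m with h3 | h3
          · rw [Fin.cycleIcc_of_lt]; exact h3
          · rw [Fin.cycleIcc_of_gt]
            show m' < (i : ℕ)
            omega
  · rw [Equiv.Perm.sign_inv, Fin.sign_cycleIcc_of_le hab]

theorem sign_sq' (u : ℤˣ) : u * u = 1 := Int.units_mul_self u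

theorem sign_eq_prod_aux {P : Partition} : ∀ (r : ℕ) (C : Fin (r + 1) → Partition)
    (q : Fin (r + 1) → ℕ → ℕ)
    (_ : ∀ (j : Fin (r + 1)) (n : ℕ), P.length ≤ n → (C j).parts n = 0)
    (_ : ∀ j : Fin r, C j.castSucc ≤ C j.succ)
    (_ : ∀ j : Fin r, StepTrack (C j.succ) (C j.castSucc) (q j.succ) (q j.castSucc))
    (σ : Equiv.Perm (Fin P.length)) (_ : ∀ i : Fin P.length, q (Fin.last r) i = σ i),
    ∃ τ : Equiv.Perm (Fin P.length), (∀ i : Fin P.length, q 0 i = τ i) ∧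
      Equiv.Perm.sign τ = Equiv.Perm.sign σ *
        ∏ j : Fin r, (-1 : ℤˣ) ^ HH (ZS (C j.succ)) (ZS (C j.castSucc)) := by
  intro r
  induction r with
  | zero =>
    intro C q _ _ _ σ hσ
    exact ⟨σ, hσ, by simp⟩
  | succ r ih =>
    intro C q hC hle hst σ hσ
    have hs := stepTrack_cases (hst (Fin.last r)) (hle (Fin.last r)) (L := P.length)
      (fun n hn => hC _ n hn)
    obtain ⟨σ', h1, h2⟩ : ∃ σ' : Equiv.Perm (Fin P.length),
        (∀ i : Fin P.length, q (Fin.last r).castSucc i = σ' i) ∧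
        Equiv.Perm.sign σ' = Equiv.Perm.sign σ *
          (-1 : ℤˣ) ^ HH (ZS (C (Fin.last r).succ)) (ZS (C (Fin.last r).castSucc)) := by
      rcases hs with ⟨hAB, hg⟩ | ⟨m, m', hm, hm', hg, hH, -⟩
      · refine ⟨σ, ?_, ?_⟩
        · intro i; rw [hg]; exact hσ i
        · rw [hAB, HH_self]; simp
      · obtain ⟨c, hc, hc'⟩ := exists_cyc hm hm'
        refine ⟨c * σ, ?_, ?_⟩
        · intro i
          have := hσ i
          rw [hg, Equiv.Perm.mul_apply, hc]
          simp only [Fin.succ_last]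
          rw [this]
        · rw [Equiv.Perm.sign_mul, hc', hH, mul_comm]
    obtain ⟨τ, h3, h4⟩ := ih (fun j => C j.castSucc) (fun j => q j.castSucc)
      (fun j n hn => hC _ n hn) (fun j => hle j.castSucc) (fun j => hst j.castSucc) σ' h1
    refine ⟨τ, h3, ?_⟩
    rw [h4, h2, Fin.prod_univ_castSucc, mul_assoc]
    congr 1
    rw [mul_comm]
    rfl

theorem sign_eq_prod {P : Partition} {μ : List ℕ} (T : RHT P μ)
    (π : Equiv.Perm (Fin P.length)) (h : IsZeroPerm T π) :
    Equiv.Perm.sign π =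
      ∏ j : Fin μ.length, (-1 : ℤˣ) ^ HH (ZS (T.chain j.succ)) (ZS (T.chain j.castSucc)) := by
  obtain ⟨q, h1, h2, h3⟩ := h
  obtain ⟨τ, h4, h5⟩ := sign_eq_prod_aux (P := P) μ.length T.chain q
    (fun j n hn => chain_parts T j hn) (fun j => step_le (T.step j)) h2 Fin.revPerm
    (fun i => by rw [h1 i i.2]; simp [Fin.val_rev]; omega)
  have : τ * π = Fin.revPerm := by
    ext i
    rw [Equiv.Perm.mul_apply, ← h4, h3]
    simp [Fin.val_rev]; omega
  have h6 : Equiv.Perm.sign τ * Equiv.Perm.sign π = Equiv.Perm.sign (Fin.revPerm (n := P.length)) := by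
    rw [← Equiv.Perm.sign_mul, this]
  rw [h5, mul_assoc] at h6
  have h7 := mul_eq_left.1 h6
  rw [mul_eq_one_iff_eq_inv] at h7
  rw [← inv_inj, ← h7, Int.units_inv_eq_self]

/-- Pair sign: disagreement of the usual order and the residue order. -/
def eps (k : ℕ) (z w : ℤ) : ℤˣ := if z < w ∧ w % k < z % k then -1 else 1

/-- Sign of the residue sorting of a finite set. -/
def rho (k : ℕ) (F : Finset ℤ) : ℤˣ := ∏ z ∈ F, ∏ w ∈ F, eps k z w

theorem rho_insert (k : ℕ) {x : ℤ} {G : Finset ℤ} (h : x ∉ G) :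
    rho k (insert x G) = rho k G * ∏ z ∈ G, (eps k x z * eps k z x) := by
  unfold rho
  rw [Finset.prod_insert h, Finset.prod_insert h]
  have e : ∀ z, ∏ w ∈ insert x G, eps k z w = eps k z x * ∏ w ∈ G, eps k z w :=
    fun z => Finset.prod_insert h
  simp only [e, Finset.prod_mul_distrib]
  have : eps k x x = 1 := by simp [eps]
  rw [this]
  simp only [one_mul]
  rw [mul_comm (∏ z ∈ G, eps k z x), ← mul_assoc, mul_comm (∏ z ∈ G, eps k x z), mul_assoc]

/-- Truncated zero set. -/
def FF (A : Partition) (L : ℕ) : Finset ℤ := (Finset.range L).image (zpos A)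

theorem mem_FF {A : Partition} {L : ℕ} (hL : ∀ n, L ≤ n → A.parts n = 0) (z : ℤ) :
    z ∈ FF A L ↔ z ∈ ZS A ∧ -(L : ℤ) ≤ z := by
  simp only [FF, Finset.mem_image, Finset.mem_range]
  constructor
  · rintro ⟨n, hn, rfl⟩
    refine ⟨⟨n, rfl⟩, ?_⟩
    unfold zpos; omega
  · rintro ⟨⟨n, rfl⟩, h⟩
    refine ⟨n, ?_, rfl⟩
    by_contra hc
    have := hL n (by omega)
    unfold zpos at h; omega

theorem eps_aux (k : ℕ) {x y z : ℤ} (hyx : y < x) (hk : x % k = y % k) (hzx : z ≠ x)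
    (hzy : z ≠ y) :
    (eps k x z * eps k z x) * (eps k y z * eps k z y) =
      if (y < z ∧ z < x) ∧ ¬ z % k = x % k then -1 else 1 := by
  unfold eps
  rw [← hk]
  rcases lt_trichotomy (z % k) (x % k) with h | h | h <;>
  rcases lt_or_gt_of_ne hzx with h1 | h1 <;>
  rcases lt_or_gt_of_ne hzy with h2 | h2 <;>
  first
  | (exfalso; omega)
  | simp [h, h1, h2, h1.not_gt, h2.not_gt, h.not_gt, h.ne, h.ne']
  | simp [h]

theorem core_step (k : ℕ) {S S' : Set ℤ} {x y : ℤ} (hm : Move S S' x y) (hyx : y < x)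
    (hk : x % k = y % k) {F F' : Finset ℤ} {L : ℤ} (hF : ∀ z, z ∈ F ↔ z ∈ S ∧ L ≤ z)
    (hF' : ∀ z, z ∈ F' ↔ z ∈ S' ∧ L ≤ z) (hLy : L ≤ y) :
    (-1 : ℤˣ) ^ HH S S' = rho k F * rho k F' *
      (-1) ^ {z | z ∈ S ∧ (y < z ∧ z < x) ∧ z % k = x % k}.ncard := by
  have hFx : F = insert x (F.erase x) := by
    rw [Finset.insert_erase]
    rw [hF]; exact ⟨hm.hx, by omega⟩
  have hF'y : F' = insert y (F.erase x) := by
    ext z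
    rw [Finset.mem_insert, Finset.mem_erase, hF, hF']
    by_cases h1 : z = y
    · subst h1; simp [hm.hy', hLy]
    · by_cases h2 : z = x
      · subst h2; simp [hm.hx', h1]
      · simp [h1, h2, hm.ho z h2 h1]
  have hxG : x ∉ F.erase x := by simp
  have hyG : y ∉ F.erase x := by
    rw [Finset.mem_erase, hF]; exact fun h => hm.hy h.2.1
  have e1 : HH S S' = ((F.erase x).filter fun z => y < z ∧ z < x).card := by
    rw [hm.HH_eq, ← Set.ncard_coe_finset]
    congr 1
    ext z
    simp only [Set.mem_ofPred_eq, Finset.coe_filter, Finset.mem_erase, hF]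
    constructor
    · rintro ⟨a, b, c⟩; exact ⟨⟨by omega, a, by omega⟩, b, c⟩
    · rintro ⟨⟨_, a, _⟩, b, c⟩; exact ⟨a, b, c⟩
  have e2 : {z | z ∈ S ∧ (y < z ∧ z < x) ∧ z % k = x % k}.ncard =
      ((F.erase x).filter fun z => (y < z ∧ z < x) ∧ z % k = x % k).card := by
    rw [← Set.ncard_coe_finset]
    congr 1
    ext z
    simp only [Set.mem_ofPred_eq, Finset.coe_filter, Finset.mem_erase, hF]
    constructor
    · rintro ⟨a, b, c⟩; exact ⟨⟨by omega, a, by omega⟩, b, c⟩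
    · rintro ⟨⟨_, a, _⟩, b, c⟩; exact ⟨a, b, c⟩
  have pw : ∀ p : ℤ → Prop, ∀ _ : DecidablePred p, (-1 : ℤˣ) ^ ((F.erase x).filter p).card =
      ∏ z ∈ F.erase x, if p z then -1 else 1 := by
    intro p _
    rw [Finset.prod_ite]; simp
  have e3 : rho k F * rho k F' = ∏ z ∈ F.erase x,
      if (y < z ∧ z < x) ∧ ¬ z % k = x % k then (-1 : ℤˣ) else 1 := by
    rw [hF'y]
    conv_lhs => rw [hFx]
    rw [Finset.erase_insert hxG, rho_insert k hxG, rho_insert k hyG, mul_mul_mul_comm,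
      Int.units_mul_self, one_mul, ← Finset.prod_mul_distrib]
    apply Finset.prod_congr rfl
    intro z hz
    apply eps_aux k hyx hk
    · rintro rfl; exact hxG hz
    · rintro rfl; exact hyG hz
  rw [e1, e2, e3, pw, pw, ← Finset.prod_mul_distrib]
  apply Finset.prod_congr rfl
  intro z _
  by_cases h1 : y < z ∧ z < x <;> by_cases h2 : z % k = x % k <;> simp [h1, h2]

/-- Residue subsequence. -/
def SR (k : ℕ) (i : ℕ) (S : Set ℤ) : Set ℤ := {j | (i : ℤ) + j * (k : ℤ) ∈ S}

theorem SR_move {k : ℕ} (hk : 0 < k) {S S' : Set ℤ} {x y : ℤ} (hm : Move S S' x y)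
    (hxy : x % k = y % k) (i : ℕ) (hi : i < k) :
    ((i : ℤ) ≠ x % k ∧ SR k i S = SR k i S') ∨
      ((i : ℤ) = x % k ∧ Move (SR k i S) (SR k i S') (x / k) (y / k)) := by
  have hk' : (k : ℤ) ≠ 0 := by omega
  have hmod : ∀ j : ℤ, ((i : ℤ) + j * k) % k = i := by
    intro j
    rw [Int.add_mul_emod_self_right]
    exact Int.emod_eq_of_lt (by omega) (by omega)
  by_cases h : (i : ℤ) = x % k
  · right
    have hx : (i : ℤ) + x / k * k = x := by
      rw [h]; exact Int.emod_add_ediv_mul x k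
    have hy : (i : ℤ) + y / k * k = y := by
      rw [h, hxy]; exact Int.emod_add_ediv_mul y k
    refine ⟨h, ⟨?_, ?_, ?_, ?_, ?_⟩⟩
    · show _ ∈ S
      rw [hx]; exact hm.hx
    · show _ ∉ S'
      rw [hx]; exact hm.hx'
    · show _ ∉ S
      rw [hy]; exact hm.hy
    · show _ ∈ S'
      rw [hy]; exact hm.hy'
    · intro z h1 h2
      apply hm.ho
      · intro he
        apply h1
        rw [← hx] at he
        exact mul_right_cancel₀ hk' (add_left_cancel he)
      · intro he
        apply h2
        rw [← hy] at he
        exact mul_right_cancel₀ hk' (add_left_cancel he)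
  · left
    refine ⟨h, ?_⟩
    ext j
    apply hm.ho
    · rintro rfl; exact h (hmod j).symm
    · intro he
      apply h
      rw [hxy, ← he, hmod]

theorem prod_SR {k : ℕ} (hk : 0 < k) {S S' : Set ℤ} {x y : ℤ} (hm : Move S S' x y)
    (hxy : x % k = y % k) :
    ∏ i : Fin k, (-1 : ℤˣ) ^ HH (SR k i S) (SR k i S') =
      (-1) ^ {z | z ∈ S ∧ (y < z ∧ z < x) ∧ z % k = x % k}.ncard := by
  have hk0 : (0 : ℤ) < k := by omega
  have h0 := Int.emod_nonneg x hk0.ne'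
  have h1 := Int.emod_lt_of_pos x hk0
  have hr : (((x % k).toNat : ℕ) : ℤ) = x % k := Int.toNat_of_nonneg h0
  rw [Finset.prod_eq_single (⟨(x % k).toNat, by omega⟩ : Fin k)]
  · rcases SR_move hk hm hxy (x % k).toNat (by omega) with ⟨h, _⟩ | ⟨_, h⟩
    · exact absurd hr h
    · simp only
      rw [h.HH_eq]
      congr 1
      have hinj : Function.Injective (fun j : ℤ => x % k + j * k) := by
        intro a b hab
        exact mul_right_cancel₀ hk0.ne' (add_left_cancel hab)
      rw [← Set.ncard_image_of_injective _ hinj]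
      congr 1
      have ex := Int.emod_add_ediv_mul x k
      have ey := Int.emod_add_ediv_mul y k
      ext z
      simp only [Set.mem_image, Set.mem_ofPred_eq, SR, hr]
      constructor
      · rintro ⟨j, ⟨a, b, c⟩, rfl⟩
        refine ⟨a, ⟨?_, ?_⟩, ?_⟩
        · have := mul_lt_mul_of_pos_right b hk0
          linarith
        · have := mul_lt_mul_of_pos_right c hk0
          linarith
        · rw [Int.add_mul_emod_self_right, Int.emod_emod]
      · rintro ⟨a, ⟨b, c⟩, d⟩
        have ez := Int.emod_add_ediv_mul z k
        rw [d] at ez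
        refine ⟨z / k, ⟨by rw [ez]; exact a, ?_, ?_⟩, ez⟩
        · apply lt_of_mul_lt_mul_right _ hk0.le
          linarith
        · apply lt_of_mul_lt_mul_right _ hk0.le
          linarith
  · intro i _ hi
    rcases SR_move hk hm hxy i i.2 with ⟨_, h⟩ | ⟨h, _⟩
    · rw [h, HH_self, pow_zero]
    · exfalso
      apply hi
      apply Fin.ext
      simp only
      omega
  · intro h; exact absurd (Finset.mem_univ _) h

theorem HH_shift (S S' : Set ℤ) (d : ℤ) : HH {j | j + d ∈ S} {j | j + d ∈ S'} = HH S S' := by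
  unfold HH
  have hinj : Function.Injective (fun j : ℤ => j + d) := fun a b h => add_right_cancel h
  rw [← Set.ncard_image_of_injective _ hinj]
  congr 1
  ext z
  simp only [Set.mem_image, Set.mem_ofPred_eq]
  constructor
  · rintro ⟨j, ⟨a, x, hx, hx', y, hy, hy', h1, h2⟩, rfl⟩
    exact ⟨a, x + d, hx, hx', y + d, hy, hy', by omega, by omega⟩
  · rintro ⟨a, x, hx, hx', y, hy, hy', h1, h2⟩
    exact ⟨z - d, ⟨by simpa using a, x - d, by simpa using hx, by simpa using hx', y - d,
      by simpa using hy, by simpa using hy', by omega, by omega⟩, by omega⟩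

theorem count_zeros (Q : Partition) {N : ℕ} (hN : Q.length ≤ N) :
    {z | z ∈ ZS Q ∧ -(N : ℤ) ≤ z}.ncard = N := by
  have : {z | z ∈ ZS Q ∧ -(N : ℤ) ≤ z} = (FF Q N : Set ℤ) := by
    ext z
    rw [Finset.mem_coe, mem_FF (fun n hn => parts_of_length_le Q (hN.trans hn))]
    rfl
  rw [this, Set.ncard_coe_finset, FF, Finset.card_image_of_injective _ (zpos_inj Q),
    Finset.card_range]

theorem count_shift (Q : Partition) {S : Set ℤ} {d : ℤ} (h : ∀ j, j ∈ ZS Q ↔ j + d ∈ S)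
    {M : ℤ} (hM : (Q.length : ℤ) ≤ M + d) :
    ({z | z ∈ S ∧ -M ≤ z}.ncard : ℤ) = M + d := by
  have hinj : Function.Injective (fun j : ℤ => j + d) := fun a b h => add_right_cancel h
  obtain ⟨N, hN⟩ := Int.eq_ofNat_of_zero_le (show 0 ≤ M + d by omega)
  have e := count_zeros Q (N := N) (by omega)
  rw [← Set.ncard_image_of_injective _ hinj] at e
  rw [hN, ← e]
  congr 2
  ext z
  simp only [Set.mem_image, Set.mem_ofPred_eq, h]
  constructor
  · rintro ⟨a, b⟩
    exact ⟨z - d, ⟨by simpa using a, by omega⟩, by omega⟩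
  · rintro ⟨j, ⟨a, b⟩, rfl⟩
    exact ⟨a, by omega⟩

theorem quot_HH {S S' : Set ℤ} (hS : S = S' ∨ ∃ x y, Move S S' x y) {QA QB : Partition}
    {dA dB : ℤ} (hA : ∀ j, j ∈ ZS QA ↔ j + dA ∈ S) (hB : ∀ j, j ∈ ZS QB ↔ j + dB ∈ S') :
    HH (ZS QA) (ZS QB) = HH S S' := by
  have hev : ∃ M₀ : ℤ, ∀ M, M₀ ≤ M →
      {z | z ∈ S ∧ -M ≤ z}.ncard = {z | z ∈ S' ∧ -M ≤ z}.ncard := by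
    rcases hS with rfl | ⟨x, y, hm⟩
    · exact ⟨0, fun _ _ => rfl⟩
    · refine ⟨|x| + |y|, fun M hM => ?_⟩
      have hx : -M ≤ x := by
        have := neg_abs_le x; have := abs_nonneg y; omega
      have hy : -M ≤ y := by
        have := neg_abs_le y; have := abs_nonneg x; omega
      have e : {z | z ∈ S' ∧ -M ≤ z} = insert y ({z | z ∈ S ∧ -M ≤ z} \ {x}) := by
        ext z
        simp only [Set.mem_ofPred_eq, Set.mem_insert_iff, Set.mem_sdiff, Set.mem_singleton_iff]
        by_cases h1 : z = y
        · subst h1; simp [hm.hy', hy]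
        · by_cases h2 : z = x
          · subst h2; simp [hm.hx', h1]
          · simp [h1, h2, hm.ho z h2 h1]
      rw [e, Set.ncard_exchange]
      · exact fun h => hm.hy h.1
      · exact ⟨hm.hx, hx⟩
  obtain ⟨M₀, hM₀⟩ := hev
  have hd : dA = dB := by
    let M : ℤ := |M₀| + |(QA.length : ℤ) - dA| + |(QB.length : ℤ) - dB|
    have a1 := le_abs_self M₀
    have a2 := le_abs_self ((QA.length : ℤ) - dA)
    have a3 := le_abs_self ((QB.length : ℤ) - dB)
    have b1 := abs_nonneg M₀
    have b2 := abs_nonneg ((QA.length : ℤ) - dA)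
    have b3 := abs_nonneg ((QB.length : ℤ) - dB)
    have c1 := count_shift QA hA (M := M) (by omega)
    have c2 := count_shift QB hB (M := M) (by omega)
    rw [hM₀ M (by omega), c2] at c1
    omega
  subst hd
  rw [← HH_shift S S' dA]
  congr 1
  · ext j; exact hA j
  · ext j; exact hB j

theorem step_general {A B : Partition} {f g : ℕ → ℕ} {t : ℕ} (h : StepTrack A B f g)
    (hs : IsStep A B t) {L : ℕ} (hL : ∀ n, L ≤ n → A.parts n = 0) :
    A = B ∨ ∃ x y : ℤ, y < x ∧ Move (ZS A) (ZS B) x y ∧ x - y = t ∧ -(L : ℤ) ≤ y := by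
  rcases stepTrack_cases h (step_le hs) hL with ⟨h, -⟩ | ⟨m, m', _, hm', _, _, hlt, hmv, hL', hsum⟩
  · exact Or.inl h
  · right
    refine ⟨_, _, hlt, hmv, ?_, hL'⟩
    rw [← hsum L hm', ← skew_ncard (step_le hs) hL, step_ncard hs]

theorem step_T {k : ℕ} (hk : 0 < k) {A B : Partition} {f g : ℕ → ℕ} {t : ℕ}
    (h : StepTrack A B f g) (hs : IsStep A B (k * t)) {L : ℕ}
    (hA : ∀ n, L ≤ n → A.parts n = 0) (hB : ∀ n, L ≤ n → B.parts n = 0)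
    {QA QB : Fin k → Partition} (hQA : IsKQuotient k A QA) (hQB : IsKQuotient k B QB) :
    (-1 : ℤˣ) ^ HH (ZS A) (ZS B) = rho k (FF A L) * rho k (FF B L) *
      ∏ i : Fin k, (-1 : ℤˣ) ^ HH (ZS (QA i)) (ZS (QB i)) := by
  have hq : ∀ i : Fin k, (SR k i (ZS A) = SR k i (ZS B) ∨
      ∃ x y, Move (SR k i (ZS A)) (SR k i (ZS B)) x y) →
      HH (ZS (QA i)) (ZS (QB i)) = HH (SR k i (ZS A)) (SR k i (ZS B)) := by
    intro i hi
    obtain ⟨dA, hdA⟩ := hQA i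
    obtain ⟨dB, hdB⟩ := hQB i
    exact quot_HH hi hdA hdB
  rcases step_general h hs hA with rfl | ⟨x, y, hyx, hm, hxy, hLy⟩
  · have : ∀ i : Fin k, (-1 : ℤˣ) ^ HH (ZS (QA i)) (ZS (QB i)) = 1 := by
      intro i
      rw [hq i (Or.inl rfl), HH_self, pow_zero]
    simp [this, HH_self, Int.units_mul_self]
  · have hmod : x % k = y % k := by
      have : x = y + k * t := by push_cast at hxy; omega
      rw [this, Int.add_mul_emod_self_left]
    rw [core_step k hm hyx hmod (mem_FF hA) (mem_FF hB) hLy, ← prod_SR hk hm hmod]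
    congr 1
    apply Finset.prod_congr rfl
    intro i _
    rw [hq i]
    rcases SR_move hk hm hmod i i.2 with ⟨_, h⟩ | ⟨_, h⟩
    · exact Or.inl h
    · exact Or.inr ⟨_, _, h⟩

theorem step_T0 {k : ℕ} {A B : Partition} {f g : ℕ → ℕ}
    (h : StepTrack A B f g) (hs : IsStep A B k) {L : ℕ}
    (hA : ∀ n, L ≤ n → A.parts n = 0) (hB : ∀ n, L ≤ n → B.parts n = 0) :
    (-1 : ℤˣ) ^ HH (ZS A) (ZS B) = rho k (FF A L) * rho k (FF B L) := by
  rcases step_general h hs hA with rfl | ⟨x, y, hyx, hm, hxy, hLy⟩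
  · simp [HH_self, Int.units_mul_self]
  · have hx : x = y + k := by omega
    have hmod : x % k = y % k := by rw [hx]; simp
    rw [core_step k hm hyx hmod (mem_FF hA) (mem_FF hB) hLy]
    have : {z | z ∈ ZS A ∧ (y < z ∧ z < x) ∧ z % k = x % k} = ∅ := by
      ext z
      simp only [Set.mem_ofPred_eq, Set.mem_empty_iff_false, iff_false]
      rintro ⟨_, ⟨a, b⟩, c⟩
      rw [hmod] at c
      obtain ⟨q, hq⟩ := Int.ModEq.dvd (show y ≡ z [ZMOD k] from c.symm)
      have h1 : 0 < (k : ℤ) * q := by omega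
      have h2 : (k : ℤ) * q < k * 1 := by omega
      have hk : (0 : ℤ) < k := by omega
      have := pos_of_mul_pos_right h1 hk.le
      have := lt_of_mul_lt_mul_left h2 hk.le
      omega
    rw [this]; simp

theorem telescope : ∀ (n : ℕ) (f : Fin (n + 1) → ℤˣ),
    ∏ j : Fin n, (f j.succ * f j.castSucc) = f (Fin.last n) * f 0 := by
  intro n
  induction n with
  | zero => intro f; simp [Int.units_mul_self]
  | succ n ih =>
    intro f
    rw [Fin.prod_univ_castSucc]
    have := ih (fun j => f j.castSucc)
    simp only [Fin.succ_castSucc]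
    rw [this, Fin.succ_last, Fin.castSucc_zero, mul_comm, mul_assoc, ← mul_assoc (f _) (f _) (f 0),
      Int.units_mul_self, one_mul]

theorem const_between {n : ℕ} {α : Type} (C : Fin (n + 1) → α) (b : Fin n → Prop)
    (h : ∀ j, ¬ b j → C j.castSucc = C j.succ) (u : ℕ) (hu : u < n + 1) :
    ∀ (v : ℕ) (hv : v < n + 1), u ≤ v → (∀ j : Fin n, u ≤ (j : ℕ) → (j : ℕ) < v → ¬ b j) →
      C ⟨u, hu⟩ = C ⟨v, hv⟩ := by
  intro v
  induction v with
  | zero =>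
    intro hv huv _
    have : u = 0 := by omega
    subst this; rfl
  | succ v ih =>
    intro hv huv hb
    rcases huv.lt_or_eq with h1 | h1
    · rw [ih (by omega) (by omega) (fun j a c => hb j a (by omega))]
      exact h ⟨v, by omega⟩ (hb ⟨v, by omega⟩ (by simp; omega) (by simp))
    · subst h1; rfl

theorem omega_chain {n r : ℕ} {α : Type} (C : Fin (n + 1) → α) (D : Fin (r + 1) → α)
    (b : Fin n → Prop) (h : ∀ j, ¬ b j → C j.castSucc = C j.succ)
    (e : Fin r → Fin n) (he : StrictMono e) (hs : ∀ j, b j → ∃ s, e s = j)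
    (h0 : D 0 = C 0) (hD : ∀ s : Fin r, D s.succ = C (e s).succ) (s : Fin r) :
    D s.castSucc = C (e s).castSucc := by
  obtain ⟨s, hs'⟩ := s
  cases s with
  | zero =>
    have := const_between C b h 0 (by omega) (e ⟨0, hs'⟩ : ℕ) (by omega) (by omega) (by
      intro j _ hj hb
      obtain ⟨s', rfl⟩ := hs j hb
      have : s' < ⟨0, hs'⟩ := he.lt_iff_lt.1 hj
      simp [Fin.lt_def] at this)
    exact h0.trans this
  | succ s =>
    have h1 := hD ⟨s, by omega⟩
    have hlt : e ⟨s, by omega⟩ < e ⟨s + 1, hs'⟩ := he (by simp [Fin.lt_def])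
    have := const_between C b h ((e ⟨s, by omega⟩ : ℕ) + 1) (by omega)
      (e ⟨s + 1, hs'⟩ : ℕ) (by omega) (by exact hlt) (by
      intro j hj1 hj hb
      obtain ⟨s', rfl⟩ := hs j hb
      have a1 : s' < ⟨s + 1, hs'⟩ := he.lt_iff_lt.1 hj
      have a2 : (⟨s, by omega⟩ : Fin r) < s' := he.lt_iff_lt.1 hj1
      simp [Fin.lt_def] at a1 a2
      omega)
    exact h1.trans this

/-- Sign Decomposition Theorem: let `λ` have empty `k`-core,
let `μ` be a partition of `p = |λ|/k`, and `T ∈ RHT_{kμ}^λ`. If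
`ω_{kμ}^λ(T) = (T₁,…,T_k)` then
`sign(π_T) = sign(π_λ) · sign(π_{T₁}) ⋯ sign(π_{T_k})`. -/
theorem sign_decomposition (k p : ℕ) (hk : 2 ≤ k) (P : Partition)
    (hcore : IsKCore k P Partition.empty) (hp : P.size = k * p)
    (μ : List ℕ) (hμsort : μ.Pairwise (· ≥ ·)) (hμpos : ∀ x ∈ μ, 0 < x)
    (hμsum : μ.sum = p)
    (Q : Fin k → Partition) (hQ : IsKQuotient k P Q) (ν : Fin k → List ℕ)
    (T : RHT P (μ.map fun x => k * x)) (Ti : ∀ i : Fin k, RHT (Q i) (ν i))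
    (hω : OmegaRel k T Ti)
    (πT : Equiv.Perm (Fin P.length)) (hπT : IsZeroPerm T πT)
    (T₀ : RHT P (List.replicate p k)) (πlam : Equiv.Perm (Fin P.length))
    (hπlam : IsZeroPerm T₀ πlam)
    (πi : ∀ i : Fin k, Equiv.Perm (Fin (Q i).length))
    (hπi : ∀ i : Fin k, IsZeroPerm (Ti i) (πi i)) :
    Equiv.Perm.sign πT =
      Equiv.Perm.sign πlam * ∏ i : Fin k, Equiv.Perm.sign (πi i) := by
  have hk0 : 0 < k := by omega
  have sT := sign_eq_prod T πT hπT
  have s0 := sign_eq_prod T₀ πlam hπlam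
  obtain ⟨q, -, hq, -⟩ := hπT
  obtain ⟨q₀, -, hq₀, -⟩ := hπlam
  obtain ⟨QC, a, hQC, hne, ht, he⟩ := hω
  have s0' : Equiv.Perm.sign πlam =
      rho k (FF P P.length) * rho k (FF Partition.empty P.length) := by
    have hP : rho k (FF P P.length) * rho k (FF Partition.empty P.length) =
        rho k (FF (T₀.chain (Fin.last _)) P.length) * rho k (FF (T₀.chain 0) P.length) := by
      rw [T₀.chain_last, T₀.chain_zero]
    rw [s0, hP, ← telescope _ (fun j => rho k (FF (T₀.chain j) P.length))]
    apply Finset.prod_congr rfl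
    intro j _
    have hst := T₀.step j
    have hget : (List.replicate p k).get j = k := by simp
    rw [hget] at hst
    exact step_T0 (hq₀ j) hst (fun n hn => chain_parts T₀ _ hn) (fun n hn => chain_parts T₀ _ hn)
  have sT' : Equiv.Perm.sign πT =
      rho k (FF P P.length) * rho k (FF Partition.empty P.length) *
        ∏ j, ∏ i : Fin k, (-1 : ℤˣ) ^ HH (ZS (QC (Fin.succ j) i)) (ZS (QC (Fin.castSucc j) i)) := by
    have hP : rho k (FF P P.length) * rho k (FF Partition.empty P.length) =
        rho k (FF (T.chain (Fin.last _)) P.length) * rho k (FF (T.chain 0) P.length) := by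
      rw [T.chain_last, T.chain_zero]
    rw [sT, hP, ← telescope _ (fun j => rho k (FF (T.chain j) P.length)),
      ← Finset.prod_mul_distrib]
    apply Finset.prod_congr rfl
    intro j _
    obtain ⟨t, ht1, -⟩ := ht j
    have hst := T.step j
    rw [ht1] at hst
    exact step_T hk0 (hq j) hst (fun n hn => chain_parts T _ hn) (fun n hn => chain_parts T _ hn)
      (hQC _) (hQC _)
  rw [sT', s0', Finset.prod_comm]
  congr 1
  apply Finset.prod_congr rfl
  intro i _
  rw [sign_eq_prod (Ti i) (πi i) (hπi i)]
  obtain ⟨e, he1, he2, he3, -, he5, he6⟩ := he i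
  symm
  apply Finset.prod_of_injOn e he1.injective.injOn
  · intro s _; simp
  · intro j _ hj
    have : i ≠ a j := by
      intro h
      obtain ⟨s, hs⟩ := he3 j h.symm
      exact hj ⟨s, by simp, hs⟩
    rw [hne j i this, HH_self, pow_zero]
  · intro s _
    rw [he6 s, omega_chain (fun j => QC j i) (Ti i).chain (fun j => a j = i)
      (fun j hj => hne j i (fun h => hj h.symm)) e he1 he3 he5 he6 s]

end RimHookPaper
end

section
/- If H is a skew shape ν ⊆ λ (i.e. H = λ/ν) which is a rim hook of length kt, where k,t ≥ 1, then there exists a skew rim hook tableau of shape H consisting of t rim hooks of length k each; that is, there is a chain ν = ν^0 ⊆ ν^1 ⊆ … ⊆ ν^t = λ of partitions such that each ν^i/ν^{i−1} is a rim hook of length k. -/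
open scoped BigOperators

namespace RimHookPaper

/-- Bead-move description of a rim hook. -/
def Bead (P Q : Partition) (n : ℕ) : Prop :=
  ∃ r s : ℕ, r ≤ s ∧ (∀ i, i < r → P.parts i = Q.parts i) ∧
    (∀ i, s < i → P.parts i = Q.parts i) ∧
    (∀ i, r ≤ i → i < s → Q.parts i + 1 = P.parts (i + 1)) ∧
    Q.parts s < P.parts s ∧ P.parts r + s = Q.parts s + r + n

lemma mem_skew (P Q : Partition) (i j : ℕ) :
    (i, j) ∈ P.skew Q ↔ Q.parts i ≤ j ∧ j < P.parts i := by
  simp only [Partition.skew, Partition.cells, Set.mem_sdiff, Set.mem_ofPred_eq]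
  omega

lemma bead_sum (P Q : Partition) (r s : ℕ) (hle : ∀ i, Q.parts i ≤ P.parts i)
    (hm : ∀ i, r ≤ i → i < s → Q.parts i + 1 = P.parts (i + 1)) :
    ∀ m, r ≤ m → m ≤ s →
      (∑ i ∈ Finset.Icc r m, (P.parts i - Q.parts i)) + Q.parts m + r = P.parts r + m := by
  intro m hrm
  induction m, hrm using Nat.le_induction with
  | base => intro _; have := hle r; simp; omega
  | succ m hrm ih =>
    intro hms
    rw [Finset.sum_Icc_succ_top (by omega)]
    have h1 := ih (by omega)
    have h2 := hm m hrm (by omega)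
    have h3 := hle (m + 1)
    omega

lemma bead_ncard (P Q : Partition) (r s : ℕ) (hrs : r ≤ s)
    (hle : ∀ i, Q.parts i ≤ P.parts i)
    (h1 : ∀ i, i < r → P.parts i = Q.parts i)
    (h2 : ∀ i, s < i → P.parts i = Q.parts i)
    (hm : ∀ i, r ≤ i → i < s → Q.parts i + 1 = P.parts (i + 1)) :
    (P.skew Q).ncard + Q.parts s + r = P.parts r + s := by
  rw [← bead_sum P Q r s hle hm s hrs le_rfl]
  congr 2
  have e : P.skew Q = (fun x : (Σ _ : ℕ, ℕ) => (x.1, x.2)) ''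
      (((Finset.Icc r s).sigma (fun i => Finset.Ico (Q.parts i) (P.parts i)) :
        Finset (Σ _ : ℕ, ℕ)) : Set (Σ _ : ℕ, ℕ)) := by
    ext ⟨i, j⟩
    rw [mem_skew]
    constructor
    · intro h
      refine ⟨⟨i, j⟩, ?_, rfl⟩
      simp only [Finset.mem_coe, Finset.mem_sigma, Finset.mem_Icc, Finset.mem_Ico]
      refine ⟨⟨?_, ?_⟩, h⟩
      · by_contra hc
        have := h1 i (by omega)
        omega
      · by_contra hc
        have := h2 i (by omega)
        omega
    · rintro ⟨⟨i', j'⟩, h, he⟩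
      simp only [Finset.mem_coe, Finset.mem_sigma, Finset.mem_Icc, Finset.mem_Ico] at h
      simp only [Prod.mk.injEq] at he
      obtain ⟨rfl, rfl⟩ := he
      exact h.2
  rw [e, Set.ncard_image_of_injective, Set.ncard_coe_finset, Finset.card_sigma]
  · simp
  · rintro ⟨a, b⟩ ⟨c, d⟩ h
    simp only [Prod.mk.injEq] at h
    obtain ⟨rfl, rfl⟩ := h
    rfl

lemma bead_of_rimHook {P Q : Partition} {n : ℕ} (h : IsRimHook P Q n) : Bead P Q n := by
  obtain ⟨hle, ⟨⟨i0, j0⟩, hc⟩, hconn, hsq, hcard⟩ := h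
  replace hle : ∀ i, Q.parts i ≤ P.parts i := hle
  have hex : ∃ i, Q.parts i < P.parts i := ⟨i0, by rw [mem_skew] at hc; omega⟩
  obtain ⟨N, hN⟩ := P.eventually_zero
  classical
  have hlt : ∀ i, Q.parts i < P.parts i → i ≤ N := by
    intro i hi
    by_contra hcon
    have := hN i (by omega)
    omega
  obtain ⟨r, hr, hrmin⟩ : ∃ r, Q.parts r < P.parts r ∧ ∀ i, i < r → P.parts i = Q.parts i := by
    refine ⟨Nat.find hex, Nat.find_spec hex, fun i hi => ?_⟩
    have := Nat.find_min hex hi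
    have := hle i
    omega
  obtain ⟨s, hs, hsmax⟩ : ∃ s, Q.parts s < P.parts s ∧ ∀ i, s < i → P.parts i = Q.parts i := by
    refine ⟨Nat.findGreatest (fun i => Q.parts i < P.parts i) N,
      Nat.findGreatest_spec (P := fun i => Q.parts i < P.parts i) (hlt r hr) hr, fun i hi => ?_⟩
    by_contra hcon
    have h1 := hle i
    have h2 : Q.parts i < P.parts i := by omega
    have := Nat.le_findGreatest (P := fun i => Q.parts i < P.parts i) (hlt i h2) h2
    omega
  have hrs : r ≤ s := by
    by_contra hcon
    have := hsmax r (by omega)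
    omega
  have hmid : ∀ i, r ≤ i → i < s → Q.parts i + 1 = P.parts (i + 1) := by
    intro i hri his
    have hle1 : P.parts (i + 1) ≤ Q.parts i + 1 := by
      by_contra hcon
      apply hsq
      have a1 := Q.antitone (Nat.le_succ i)
      have a2 := P.antitone (Nat.le_succ i)
      simp only [Nat.succ_eq_add_one] at a1 a2
      refine ⟨i, Q.parts i, ?_, ?_, ?_, ?_⟩ <;> rw [mem_skew] <;> omega
    have hge1 : Q.parts i < P.parts (i + 1) := by
      by_contra hcon
      have path := hconn (r, Q.parts r) (by rw [mem_skew]; omega) (s, Q.parts s)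
        (by rw [mem_skew]; omega)
      have inv : ∀ d, Relation.ReflTransGen
          (fun x y => x ∈ P.skew Q ∧ y ∈ P.skew Q ∧ Adj x y) (r, Q.parts r) d → d.1 ≤ i := by
        intro d hd
        induction hd with
        | refl => exact hri
        | tail _ hst ih =>
          rename_i b c _
          obtain ⟨b1, b2⟩ := b
          obtain ⟨c1, c2⟩ := c
          obtain ⟨hb, hcc, hadj⟩ := hst
          rw [mem_skew] at hb hcc
          simp only [Adj] at hadj
          simp only at ih ⊢
          by_contra hci
          obtain rfl : b1 = i := by omega
          obtain rfl : c1 = b1 + 1 := by omega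
          omega
      have := inv _ path
      simp only at this
      omega
    omega
  refine ⟨r, s, hrs, hrmin, hsmax, hmid, hs, ?_⟩
  have := bead_ncard P Q r s hrs hle hrmin hsmax hmid
  omega

lemma rimHook_of_bead {P Q : Partition} {n : ℕ} (h : Bead P Q n) : IsRimHook P Q n := by
  obtain ⟨r, s, hrs, h1, h2, hm, hs, hn⟩ := h
  have aP : ∀ i, P.parts (i + 1) ≤ P.parts i := fun i => P.antitone (Nat.le_succ i)
  have aQ : ∀ i, Q.parts (i + 1) ≤ Q.parts i := fun i => Q.antitone (Nat.le_succ i)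
  have hle : ∀ i, Q.parts i ≤ P.parts i := by
    intro i
    rcases lt_or_ge i r with hi | hi
    · exact (h1 i hi).ge
    rcases lt_trichotomy i s with hi' | rfl | hi'
    · have := hm i hi hi'
      have := aP i
      omega
    · omega
    · exact (h2 i hi').ge
  have row : ∀ i j, (i, j) ∈ P.skew Q → r ≤ i ∧ i ≤ s := by
    intro i j hij
    rw [mem_skew] at hij
    constructor
    · by_contra hc
      have := h1 i (by omega)
      omega
    · by_contra hc
      have := h2 i (by omega)
      omega
  refine ⟨hle, ⟨(s, Q.parts s), by rw [mem_skew]; omega⟩, ?_, ?_, ?_⟩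
  · have key : ∀ m i j, (i, j) ∈ P.skew Q → j + (s - i) = m → Relation.ReflTransGen
        (fun x y => x ∈ P.skew Q ∧ y ∈ P.skew Q ∧ Adj x y) (i, j) (s, Q.parts s) := by
      intro m
      induction m using Nat.strong_induction_on with
      | _ m ih =>
        intro i j hij hmm
        have hrow := row i j hij
        have hij' := hij
        rw [mem_skew] at hij
        by_cases hj : Q.parts i < j
        · have hmem : (i, j - 1) ∈ P.skew Q := by rw [mem_skew]; omega
          refine Relation.ReflTransGen.head ⟨hij', hmem, ?_⟩ (ih _ ?_ i (j - 1) hmem rfl)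
          · exact Or.inl ⟨rfl, Or.inr (by show j - 1 + 1 = j; omega)⟩
          · omega
        · obtain rfl : j = Q.parts i := by omega
          by_cases his : i = s
          · subst his; exact Relation.ReflTransGen.refl
          · have hmem : (i + 1, Q.parts i) ∈ P.skew Q := by
              rw [mem_skew]
              have := hm i hrow.1 (by omega)
              have := aQ i
              omega
            refine Relation.ReflTransGen.head ⟨hij', hmem, ?_⟩ (ih _ ?_ (i + 1) _ hmem rfl)
            · exact Or.inr ⟨rfl, Or.inl rfl⟩
            · omega
    intro c hc d hd
    refine (key _ c.1 c.2 hc rfl).trans ?_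
    have hsym : Std.Symm (fun x y => x ∈ P.skew Q ∧ y ∈ P.skew Q ∧ Adj x y) := by
      constructor
      rintro x y ⟨hx, hy, hxy⟩
      refine ⟨hy, hx, ?_⟩
      simp only [Adj] at hxy ⊢
      omega
    exact Relation.ReflTransGen.stdSymm.symm _ _ (key _ d.1 d.2 hd rfl)
  · rintro ⟨i, j, ha, hb, hc, hd⟩
    have ra := row _ _ ha
    have rb := row _ _ hb
    rw [mem_skew] at ha hb hc hd
    have := hm i ra.1 (by omega)
    omega
  · have := bead_ncard P Q r s hrs hle h1 h2 hm
    omega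

lemma bead_split {P Q : Partition} {a b : ℕ} (ha : 1 ≤ a) (hb : 1 ≤ b)
    (h : Bead P Q (a + b)) :
    ∃ R, (Bead R Q a ∧ Bead P R b) ∨ (Bead R Q b ∧ Bead P R a) := by
  obtain ⟨r, s, hrs, h1, h2, hm, hs, hn⟩ := h
  have aP : ∀ i, P.parts (i + 1) ≤ P.parts i := fun i => P.antitone (Nat.le_succ i)
  have aQ : ∀ i, Q.parts (i + 1) ≤ Q.parts i := fun i => Q.antitone (Nat.le_succ i)
  have hle : ∀ i, Q.parts i ≤ P.parts i := by
    intro i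
    rcases lt_or_ge i r with hi | hi
    · exact (h1 i hi).ge
    rcases lt_trichotomy i s with hi' | rfl | hi'
    · have := hm i hi hi'
      have := aP i
      omega
    · omega
    · exact (h2 i hi').ge
  obtain ⟨NP, hNP⟩ := P.eventually_zero
  obtain ⟨NQ, hNQ⟩ := Q.eventually_zero
  by_cases hocc : ∃ p, r ≤ p ∧ p < s ∧ Q.parts p + s = Q.parts s + a + p
  · obtain ⟨p, hrp, hps, hp⟩ := hocc
    let R : Partition := ⟨fun i => if i ≤ p then P.parts i else Q.parts i, by
      apply antitone_nat_of_succ_le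
      intro i
      have := aP i
      have := aQ i
      have := hle i
      split_ifs <;> omega, ⟨NP + NQ, fun i hi => by
        have := hNP i (by omega)
        have := hNQ i (by omega)
        split_ifs <;> assumption⟩⟩
    have R1 : ∀ i, i ≤ p → R.parts i = P.parts i := fun i hi => if_pos hi
    have R2 : ∀ i, p < i → R.parts i = Q.parts i := fun i hi => if_neg (by omega)
    have hmp := hm p hrp hps
    have hPp := aP p
    refine ⟨R, Or.inr ⟨⟨r, p, hrp, ?_, ?_, ?_, ?_, ?_⟩, ⟨p + 1, s, hps, ?_, ?_, ?_, ?_, ?_⟩⟩⟩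
    · intro i hi; rw [R1 i (by omega), h1 i hi]
    · intro i hi; rw [R2 i hi]
    · intro i hi hi'; rw [R1 _ (by omega), hm i hi (by omega)]
    · rw [R1 p le_rfl]; omega
    · rw [R1 r hrp]; omega
    · intro i hi; rw [R1 i (by omega)]
    · intro i hi; rw [R2 i (by omega), h2 i hi]
    · intro i hi hi'; rw [R2 i (by omega), hm i (by omega) hi']
    · rw [R2 s hps]; exact hs
    · rw [R2 s hps]; omega
  · push Not at hocc
    classical
    have hex : ∃ p, r ≤ p ∧ Q.parts p + s < Q.parts s + a + p := ⟨s, hrs, by omega⟩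
    obtain ⟨p, hrp, hp, hps, hpmin⟩ : ∃ p, r ≤ p ∧ Q.parts p + s < Q.parts s + a + p ∧ p ≤ s ∧
        ∀ i, r ≤ i → i < p → Q.parts s + a + i < Q.parts i + s := by
      have hps : Nat.find hex ≤ s := Nat.find_min' hex ⟨hrs, by omega⟩
      refine ⟨Nat.find hex, (Nat.find_spec hex).1, (Nat.find_spec hex).2, hps, ?_⟩
      intro i hi hi'
      have := Nat.find_min hex hi'
      have := hocc i hi (by omega)
      omega
    obtain ⟨v, hv⟩ : ∃ v, v + s = Q.parts s + a + p := ⟨Q.parts s + a + p - s, by omega⟩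
    have up : v < P.parts p := by
      rcases Nat.eq_or_lt_of_le hrp with rfl | hlt
      · omega
      · obtain ⟨q, rfl⟩ : ∃ q, p = q + 1 := ⟨p - 1, by omega⟩
        have := hpmin q (by omega) (by omega)
        have := hm q (by omega) (by omega)
        omega
    let R : Partition := ⟨fun i => if i < p then Q.parts i else if i = p then v else P.parts i, by
      apply antitone_nat_of_succ_le
      intro i
      have := aP i
      have := aQ i
      rcases lt_trichotomy (i + 1) p with hi | hi | hi
      · rw [if_pos hi, if_pos (by omega)]; omega
      · rw [if_neg (by omega), if_pos hi, if_pos (by omega)]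
        rcases lt_or_ge i r with hir | hir
        · have := h1 i hir
          subst hi
          omega
        · have := hpmin i hir (by omega)
          omega
      · rw [if_neg (by omega), if_neg (by omega), if_neg (by omega)]
        split_ifs with hip
        · subst hip
          rcases Nat.eq_or_lt_of_le hps with rfl | hlt
          · have := h2 (i + 1) (by omega)
            omega
          · have := hm i hrp hlt
            omega
        · omega, ⟨NP + NQ + p + 1, fun i hi => by
        have := hNP i (by omega)
        rw [if_neg (by omega), if_neg (by omega), this]⟩⟩
    have R1 : ∀ i, i < p → R.parts i = Q.parts i := fun i hi => if_pos hi
    have R2 : R.parts p = v := by simp [R]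
    have R3 : ∀ i, p < i → R.parts i = P.parts i := fun i hi => by
      simp only [R]
      rw [if_neg (by omega), if_neg (by omega)]
    refine ⟨R, Or.inl ⟨⟨p, s, hps, ?_, ?_, ?_, ?_, ?_⟩, ⟨r, p, hrp, ?_, ?_, ?_, ?_, ?_⟩⟩⟩
    · intro i hi; rw [R1 i hi]
    · intro i hi; rw [R3 i (by omega), h2 i hi]
    · intro i hi hi'; rw [R3 _ (by omega), hm i (by omega) hi']
    · rcases Nat.eq_or_lt_of_le hps with rfl | hlt
      · rw [R2]; omega
      · rw [R3 s hlt]; exact hs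
    · rw [R2]; omega
    · intro i hi; rw [R1 i (by omega), h1 i hi]
    · intro i hi; rw [R3 i hi]
    · intro i hi hi'; rw [R1 i hi', hm i hi (by omega)]
    · rw [R2]; exact up
    · rw [R2]; omega

lemma split_chain (k : ℕ) (hk : 1 ≤ k) (t : ℕ) : ∀ (lam nu : Partition),
    IsRimHook lam nu (k * (t + 1)) →
    ∃ c : Fin (t + 1 + 1) → Partition, c 0 = nu ∧ c (Fin.last (t + 1)) = lam ∧
      ∀ j : Fin (t + 1), IsRimHook (c j.succ) (c j.castSucc) k := by
  induction t with
  | zero =>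
    intro lam nu h
    refine ⟨![nu, lam], rfl, rfl, fun j => ?_⟩
    fin_cases j
    simpa using h
  | succ t ih =>
    intro lam nu h
    have hb := bead_of_rimHook h
    have e : k * (t + 1 + 1) = k + k * (t + 1) := by ring
    rw [e] at hb
    obtain ⟨R, ⟨hR1, hR2⟩ | ⟨hR1, hR2⟩⟩ := bead_split hk (Nat.mul_pos hk (Nat.succ_pos t)) hb
    · obtain ⟨c, c0, cl, hc⟩ := ih lam R (rimHook_of_bead hR2)
      refine ⟨Fin.cons nu c, rfl, ?_, fun j => ?_⟩
      · rw [← Fin.succ_last, Fin.cons_succ, cl]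
      · refine Fin.cases ?_ (fun i => ?_) j
        · rw [Fin.cons_succ, c0]
          exact rimHook_of_bead hR1
        · rw [Fin.cons_succ, Fin.castSucc_succ, Fin.cons_succ]
          exact hc i
    · obtain ⟨c, c0, cl, hc⟩ := ih R nu (rimHook_of_bead hR1)
      refine ⟨Fin.snoc (α := fun _ => Partition) c lam, ?_, ?_, fun j => ?_⟩
      · rw [← Fin.castSucc_zero, Fin.snoc_castSucc, c0]
      · rw [Fin.snoc_last]
      · refine Fin.lastCases ?_ (fun i => ?_) j
        · rw [Fin.succ_last, Fin.snoc_last, Fin.snoc_castSucc, cl]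
          exact rimHook_of_bead hR2
        · rw [Fin.succ_castSucc, Fin.snoc_castSucc, Fin.snoc_castSucc]
          exact hc i

/-- Garsia–Stanley: if `λ/ν` is a rim hook of length `k·t`
(`k, t ≥ 1`), then there is a skew rim hook tableau of that shape consisting of
`t` rim hooks of length `k` each: a chain `ν = ν⁰ ⊆ ν¹ ⊆ ⋯ ⊆ νᵗ = λ` with each
`νⁱ/νⁱ⁻¹` a rim hook of length `k`. -/
theorem rim_hook_splits_into_k_hooks (k t : ℕ) (hk : 1 ≤ k) (ht : 1 ≤ t)
    (lam nu : Partition) (h : IsRimHook lam nu (k * t)) :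
    ∃ c : Fin (t + 1) → Partition, c 0 = nu ∧ c (Fin.last t) = lam ∧
      ∀ j : Fin t, IsRimHook (c j.succ) (c j.castSucc) k := by
  obtain ⟨u, rfl⟩ : ∃ u, t = u + 1 := ⟨t - 1, by omega⟩
  exact split_chain k hk u lam nu h

end RimHookPaper
end

section
/- Let k ≥ 2, p ≥ 1, m = kp. For 1 ≤ i ≤ k set C_i = {(i−1)p+1,…,ip}, let H be the subgroup of S_m consisting of all permutations mapping each block C_i to itself (so H ≅ S_p × … × S_p, k factors), and let σ_0 ∈ S_m be the shift σ_0(x) ≡ x + p (mod m). Then for every partition λ ⊢ m, (1/|H|) · Σ_{σ ∈ σ_0 H} χ^λ(σ) = Σ_{μ ⊢ p} (1/z_μ) · χ^λ_{kμ}. -/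
open scoped BigOperators

namespace RimHookPaper

/-- The shift permutation `σ₀ : x ↦ x + p (mod m)`. -/
def shiftPerm (m p : ℕ) : Equiv.Perm (Fin m) := (finRotate m) ^ p

open Finset in
theorem mp_eq {α : Type*} [Fintype α] [DecidableEq α] (f : Equiv.Perm α) (x : α) (hx : f x ≠ x) :
    Function.minimalPeriod f x = (f.cycleOf x).support.card := by
  have h1 := f.isCycleOn_support_cycleOf x
  have hmem : x ∈ (f.cycleOf x).support := by
    rw [Equiv.Perm.mem_support_cycleOf_iff]; exact ⟨Equiv.Perm.SameCycle.refl _ _, by simpa using hx⟩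
  have key : ∀ n, Function.IsPeriodicPt f n x ↔ (f.cycleOf x).support.card ∣ n := by
    intro n
    rw [← h1.pow_apply_eq hmem, Function.IsPeriodicPt, Function.IsFixedPt, Equiv.Perm.iterate_eq_pow]
  apply Nat.dvd_antisymm
  · rw [← Function.isPeriodicPt_iff_minimalPeriod_dvd, key]
  · rw [← key]; exact Function.isPeriodicPt_minimalPeriod _ _

open Finset in
theorem count_ft {α : Type*} [Fintype α] [DecidableEq α] (f : Equiv.Perm α) (n : ℕ) :
    (f.cycleType + Multiset.replicate (Fintype.card α - f.cycleType.sum) 1).count n * n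
      = (univ.filter fun x => Function.minimalPeriod f x = n).card := by
  rw [Equiv.Perm.sum_cycleType, Multiset.count_add, Multiset.count_replicate]
  rcases eq_or_ne n 1 with rfl | hn
  · have : f.cycleType.count 1 = 0 := by
      rw [Multiset.count_eq_zero]; intro h
      have := Equiv.Perm.two_le_of_mem_cycleType h
      omega
    rw [this, if_pos rfl, zero_add, mul_one, ← Finset.card_compl]
    congr 1
    ext x
    simp [Function.minimalPeriod_eq_one_iff_isFixedPt, Function.IsFixedPt]
  · rw [if_neg (Ne.symm hn), add_zero]
    rcases eq_or_ne n 0 with rfl | h0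
    · rw [mul_zero, eq_comm, Finset.card_eq_zero, Finset.filter_eq_empty_iff]
      intro x _
      have : 0 < Function.minimalPeriod f x := by
        rw [Function.minimalPeriod_pos_iff_mem_periodicPts]
        exact f.injective.mem_periodicPts x
      omega
    have hfix : ∀ x, Function.minimalPeriod f x = n → f x ≠ x := by
      intro x hx h
      exact hn (hx ▸ Function.minimalPeriod_eq_one_iff_isFixedPt.2 h)
    rw [Equiv.Perm.cycleType_def, Multiset.count_map]
    rw [Finset.card_eq_sum_card_fiberwise (f := fun x => f.cycleOf x)
      (t := f.cycleFactorsFinset.filter fun c => n = c.support.card)]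
    · rw [Finset.sum_congr rfl (g := fun _ => n)]
      · rw [Finset.sum_const, smul_eq_mul]; rfl
      · intro c hc
        simp only [mem_filter] at hc
        conv_rhs => rw [hc.2]
        congr 1
        ext x
        simp only [mem_filter, mem_univ, true_and]
        constructor
        · rintro ⟨h1, rfl⟩
          rw [Equiv.Perm.mem_support_cycleOf_iff]
          exact ⟨Equiv.Perm.SameCycle.refl _ _, by simpa using hfix _ h1⟩
        · intro h
          have h2 := Equiv.Perm.cycle_is_cycleOf h hc.1
          have h3 : f x ≠ x := by
            simpa using Equiv.Perm.mem_cycleFactorsFinset_support_le hc.1 h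
          exact ⟨by rw [mp_eq f x h3, ← h2, hc.2], h2.symm⟩
    · intro x hx
      simp only [coe_filter, mem_univ, true_and, Set.mem_ofPred_eq] at hx ⊢
      rw [Equiv.Perm.cycleOf_mem_cycleFactorsFinset_iff, Equiv.Perm.mem_support]
      exact ⟨hfix x hx, by rw [← hx, mp_eq f x (hfix x hx)]⟩


def ft {α : Type*} [Fintype α] [DecidableEq α] (f : Equiv.Perm α) : Multiset ℕ :=
  f.cycleType + Multiset.replicate (Fintype.card α - f.cycleType.sum) 1

theorem ft_pos {α : Type*} [Fintype α] [DecidableEq α] (f : Equiv.Perm α) {n : ℕ} (h : n ∈ ft f) :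
    0 < n := by
  rcases Multiset.mem_add.1 h with h | h
  · have := Equiv.Perm.two_le_of_mem_cycleType h; omega
  · rw [Multiset.eq_of_mem_replicate h]; exact one_pos

theorem ft_sum {α : Type*} [Fintype α] [DecidableEq α] (f : Equiv.Perm α) :
    (ft f).sum = Fintype.card α := by
  have := f.sum_cycleType
  have := f.support.card_le_univ
  simp [ft]
  omega

theorem ft_filter {α : Type*} [Fintype α] [DecidableEq α] (f : Equiv.Perm α) :
    (ft f).filter (fun n => 2 ≤ n) = f.cycleType := by
  rw [ft, Multiset.filter_add, Multiset.filter_eq_self.2 fun _ => Equiv.Perm.two_le_of_mem_cycleType,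
    Multiset.filter_eq_nil.2 fun a h => ?_, add_zero]
  rw [Multiset.eq_of_mem_replicate h]
  decide

theorem parts_decomp {p : ℕ} (μ : Nat.Partition p) :
    μ.parts = μ.parts.filter (fun n => 2 ≤ n) +
      Multiset.replicate (p - (μ.parts.filter (fun n => 2 ≤ n)).sum) 1 := by
  have h := Multiset.filter_add_not (fun n => 2 ≤ n) μ.parts
  have h2 : μ.parts.filter (fun n => ¬ 2 ≤ n) =
      Multiset.replicate (Multiset.card (μ.parts.filter (fun n => ¬ 2 ≤ n))) 1 := by
    rw [Multiset.eq_replicate]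
    refine ⟨rfl, fun b hb => ?_⟩
    have := Multiset.mem_filter.1 hb
    have := μ.parts_pos this.1
    omega
  set r := Multiset.card (μ.parts.filter (fun n => ¬ 2 ≤ n))
  rw [h2] at h
  have h3 := congrArg Multiset.sum h
  rw [μ.parts_sum, Multiset.sum_add, Multiset.sum_replicate, smul_eq_mul, mul_one] at h3
  have : p - (μ.parts.filter (fun n => 2 ≤ n)).sum = r := by omega
  rw [this, h]

theorem zp_add (m : Multiset ℕ) (hm : ∀ a ∈ m, 2 ≤ a) (r : ℕ) :
    zpart (m + Multiset.replicate r 1) =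
      r.factorial * m.prod * (∏ n ∈ m.toFinset, (m.count n).factorial) := by
  have h1 : m.count 1 = 0 := by
    rw [Multiset.count_eq_zero]; intro h; have := hm _ h; omega
  rw [zpart, Multiset.prod_add, Multiset.prod_replicate, one_pow, mul_one]
  rw [Finset.prod_subset (s₂ := insert 1 m.toFinset)]
  · rw [Finset.prod_insert]
    · rw [Multiset.count_add, h1, Multiset.count_replicate_self, zero_add]
      rw [Finset.prod_congr rfl (g := fun n => (m.count n).factorial)]
      · ring
      · intro n hn
        have := hm n (Multiset.mem_toFinset.1 hn)
        rw [Multiset.count_add, Multiset.count_replicate, if_neg (by omega), add_zero]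
    · rw [Multiset.mem_toFinset]; intro h; have := hm _ h; omega
  · intro x hx
    rw [Multiset.mem_toFinset, Multiset.mem_add] at hx
    rcases hx with hx | hx
    · exact Finset.mem_insert_of_mem (Multiset.mem_toFinset.2 hx)
    · rw [Multiset.eq_of_mem_replicate hx]; exact Finset.mem_insert_self _ _
  · intro x _ hx
    rw [Multiset.mem_toFinset] at hx
    rw [Multiset.count_eq_zero.2 hx]; rfl

theorem card_ft {p : ℕ} (μ : Nat.Partition p) :
    (Finset.univ.filter fun g : Equiv.Perm (Fin p) => ft g = μ.parts).card * zpart μ.parts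
      = p.factorial := by
  have hd := parts_decomp μ
  have h2 : ∀ a ∈ μ.parts.filter (fun n => 2 ≤ n), 2 ≤ a := fun a ha => (Multiset.mem_filter.1 ha).2
  have hs : (μ.parts.filter (fun n => 2 ≤ n)).sum ≤ p := by
    have h3 := congrArg Multiset.sum hd
    rw [μ.parts_sum, Multiset.sum_add] at h3
    omega
  have h := Equiv.Perm.card_of_cycleType_mul_eq (Fin p) (μ.parts.filter (fun n => 2 ≤ n))
  rw [Fintype.card_fin, if_pos ⟨hs, h2⟩, ← zp_add _ h2, ← hd] at h
  rw [← h]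
  congr 2
  ext g
  simp only [Finset.mem_filter, Finset.mem_univ, true_and]
  constructor
  · intro hg; rw [← ft_filter, hg]
  · intro hg; rw [ft, hg, Fintype.card_fin, ← hd]

theorem zp_pos {p : ℕ} (μ : Nat.Partition p) : zpart μ.parts ≠ 0 := by
  intro h
  have := card_ft μ
  rw [h, mul_zero] at this
  exact Nat.factorial_ne_zero _ this.symm

theorem sum_ft (p : ℕ) (F : Multiset ℕ → ℚ) :
    ∑ g : Equiv.Perm (Fin p), F (ft g) =
      p.factorial * ∑ μ : Nat.Partition p, (1 / (zpart μ.parts : ℚ)) * F μ.parts := by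
  let q : Equiv.Perm (Fin p) → Nat.Partition p := fun g =>
    ⟨ft g, fun h => ft_pos g h, by rw [ft_sum, Fintype.card_fin]⟩
  rw [← Finset.sum_fiberwise Finset.univ q, Finset.mul_sum]
  refine Finset.sum_congr rfl fun μ _ => ?_
  rw [Finset.sum_congr rfl (g := fun _ => F μ.parts)]
  · rw [Finset.sum_const, nsmul_eq_mul, ← card_ft μ]
    have : (Finset.univ.filter fun g => q g = μ) =
        (Finset.univ.filter fun g : Equiv.Perm (Fin p) => ft g = μ.parts) := by
      ext g
      simp [Nat.Partition.ext_iff, q]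
    rw [this]
    have hz : (zpart μ.parts : ℚ) ≠ 0 := by exact_mod_cast zp_pos μ
    push_cast
    field_simp
  · intro g hg
    rw [← (Finset.mem_filter.1 hg).2]

def Gp {p : ℕ} (s : ℕ → Equiv.Perm (Fin p)) : ℕ → Equiv.Perm (Fin p)
  | 0 => 1
  | n + 1 => s n * Gp s n

theorem Gp_succ' {p : ℕ} (s : ℕ → Equiv.Perm (Fin p)) (n : ℕ) :
    Gp s (n + 1) = Gp (fun i => s (i + 1)) n * s 0 := by
  induction n with
  | zero => simp [Gp]
  | succ n ih => rw [Gp, ih, Gp, mul_assoc]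

theorem Gp_congr {p : ℕ} (s t : ℕ → Equiv.Perm (Fin p)) (n : ℕ) (h : ∀ i < n, s i = t i) :
    Gp s n = Gp t n := by
  induction n with
  | zero => rfl
  | succ n ih => rw [Gp, Gp, ih fun i hi => h i (by omega), h n (by omega)]

theorem Gp_add {p : ℕ} (s : ℕ → Equiv.Perm (Fin p)) (k : ℕ) (hs : ∀ n, s (n + k) = s n) (n : ℕ) :
    Gp s (n + k) = Gp s n * Gp s k := by
  induction n with
  | zero => simp [Gp]
  | succ n ih => rw [show n + 1 + k = n + k + 1 by omega, Gp, ih, hs, Gp, mul_assoc]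

theorem Gp_mul {p : ℕ} (s : ℕ → Equiv.Perm (Fin p)) (k : ℕ) (hs : ∀ n, s (n + k) = s n) (n : ℕ) :
    Gp s (k * n) = Gp s k ^ n := by
  induction n with
  | zero => simp [Gp]
  | succ n ih => rw [mul_add, mul_one, Gp_add s k hs, ih, pow_succ]

theorem ft_twist {K p : ℕ} (τ : Equiv.Perm (Fin ((K + 1) * p)))
    (σ : Fin (K + 1) → Equiv.Perm (Fin p))
    (hτ : ∀ i x, τ (finProdFinEquiv (i, x)) = finProdFinEquiv (i + 1, σ i x)) :
    ft τ = (ft (Gp (fun n => σ (Fin.ofNat (K + 1) n)) (K + 1))).map (fun x => (K + 1) * x) := by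
  set s : ℕ → Equiv.Perm (Fin p) := fun n => σ (Fin.ofNat (K + 1) n) with hs
  have hper : ∀ n, s (n + (K + 1)) = s n := by
    intro n; simp only [hs]; congr 1; ext; simp
  set g := Gp s (K + 1) with hg
  have hit : ∀ n x, τ^[n] (finProdFinEquiv (0, x)) =
      finProdFinEquiv (Fin.ofNat (K + 1) n, Gp s n x) := by
    intro n x
    induction n with
    | zero => simp [Gp]
    | succ n ih =>
      rw [Function.iterate_succ_apply', ih, hτ, Gp]
      congr 2
      ext; simp [Fin.val_add]
  have hmp : ∀ x, Function.minimalPeriod τ (finProdFinEquiv (0, x)) =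
      (K + 1) * Function.minimalPeriod g x := by
    intro x
    have key : ∀ n, Function.IsPeriodicPt τ n (finProdFinEquiv (0, x)) ↔
        (K + 1) * Function.minimalPeriod g x ∣ n := by
      intro n
      rw [Function.IsPeriodicPt, Function.IsFixedPt, hit, finProdFinEquiv.injective.eq_iff,
        Prod.mk.injEq]
      have h0 : Fin.ofNat (K + 1) n = 0 ↔ (K + 1) ∣ n := by
        rw [Fin.ext_iff, Nat.dvd_iff_mod_eq_zero]; simp
      rw [h0]
      constructor
      · rintro ⟨⟨c, rfl⟩, h⟩
        rw [Gp_mul s _ hper] at h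
        apply Nat.mul_dvd_mul_left
        rw [← Function.isPeriodicPt_iff_minimalPeriod_dvd, Function.IsPeriodicPt,
          Function.IsFixedPt, Equiv.Perm.iterate_eq_pow]
        exact h
      · intro h
        obtain ⟨c, rfl⟩ := (Dvd.intro _ rfl).trans h
        refine ⟨Dvd.intro _ rfl, ?_⟩
        have h := Nat.dvd_of_mul_dvd_mul_left (Nat.succ_pos K) h
        rw [← Function.isPeriodicPt_iff_minimalPeriod_dvd, Function.IsPeriodicPt,
          Function.IsFixedPt, Equiv.Perm.iterate_eq_pow] at h
        rw [Gp_mul s _ hper]; exact h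
    apply Nat.dvd_antisymm
    · rw [← Function.isPeriodicPt_iff_minimalPeriod_dvd, key]
    · rw [← key]; exact Function.isPeriodicPt_minimalPeriod _ _
  have hmp2 : ∀ (i : Fin (K + 1)) x,
      Function.minimalPeriod τ (finProdFinEquiv (i, Gp s i x)) =
      (K + 1) * Function.minimalPeriod g x := by
    intro i x
    have := hit i x
    rw [show Fin.ofNat (K + 1) (i : ℕ) = i by ext; simp] at this
    rw [← this, Function.minimalPeriod_apply_iterate, hmp]
    exact τ.injective.mem_periodicPts _
  have hcount : ∀ N, (Finset.univ.filter fun y => Function.minimalPeriod τ y = N).card =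
      (K + 1) *
        (Finset.univ.filter fun x => (K + 1) * Function.minimalPeriod g x = N).card := by
    intro N
    let E : Fin (K + 1) × Fin p ≃ Fin ((K + 1) * p) :=
      (Equiv.prodShear (Equiv.refl _) (fun i : Fin (K + 1) => Gp s i)).trans finProdFinEquiv
    have hE : ∀ i x, E (i, x) = finProdFinEquiv (i, Gp s i x) := fun i x => rfl
    have : (Finset.univ.filter fun y => Function.minimalPeriod τ y = N) =
      ((Finset.univ : Finset (Fin (K + 1))) ×ˢ
        (Finset.univ.filter fun x => (K + 1) * Function.minimalPeriod g x = N)).map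
          E.toEmbedding := by
      ext y
      obtain ⟨⟨i, x⟩, rfl⟩ := E.surjective y
      simp only [Finset.mem_filter, Finset.mem_univ, true_and, Finset.mem_map_equiv,
        Equiv.symm_apply_apply, Finset.mem_product]
      rw [hE, hmp2]
    rw [this, Finset.card_map, Finset.card_product, Finset.card_univ, Fintype.card_fin]
  ext N
  have hτc := count_ft τ N
  rw [hcount] at hτc
  change (ft τ).count N * N = _ at hτc
  by_cases hd : (K + 1) ∣ N
  · obtain ⟨n, rfl⟩ := hd
    rw [Multiset.count_map_eq_count' (fun x => (K + 1) * x) _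
      (fun a b h => Nat.eq_of_mul_eq_mul_left (Nat.succ_pos K) h)]
    rcases Nat.eq_zero_or_pos n with rfl | hn
    · rw [Multiset.count_eq_zero.2 fun h => (ft_pos _ h).ne' (mul_zero _),
        Multiset.count_eq_zero.2 fun h => (ft_pos _ h).ne' rfl]
    · have hgc := count_ft g n
      change (ft g).count n * n = _ at hgc
      have : (Finset.univ.filter fun x => (K + 1) * Function.minimalPeriod g x = (K + 1) * n) =
          (Finset.univ.filter fun x => Function.minimalPeriod g x = n) := by
        ext x; simp
      rw [this, ← hgc] at hτc
      apply Nat.eq_of_mul_eq_mul_right (Nat.mul_pos (Nat.succ_pos K) hn)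
      rw [hτc, Nat.succ_eq_add_one]; ring
  · have hN : 0 < N := Nat.pos_of_ne_zero fun h => hd (h ▸ dvd_zero _)
    have h1 : (Finset.univ.filter fun x => (K + 1) * Function.minimalPeriod g x = N) = ∅ := by
      rw [Finset.filter_eq_empty_iff]
      intro x _ h
      exact hd (h ▸ Dvd.intro _ rfl)
    rw [h1, Finset.card_empty, mul_zero] at hτc
    have h2 : (ft τ).count N = 0 := by
      rcases Nat.mul_eq_zero.1 hτc with h | h <;> omega
    rw [h2, eq_comm]
    · rw [Multiset.count_eq_zero]
      intro h
      obtain ⟨a, _, rfl⟩ := Multiset.mem_map.1 h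
      exact hd (Dvd.intro _ rfl)

theorem sum_Gp (K p : ℕ) (F : Equiv.Perm (Fin p) → ℚ) :
    ∑ σ : Fin (K + 1) → Equiv.Perm (Fin p), F (Gp (fun n => σ (Fin.ofNat (K + 1) n)) (K + 1)) =
      (p.factorial : ℚ) ^ K * ∑ g, F g := by
  rw [← (Fin.consEquiv (fun _ => Equiv.Perm (Fin p))).sum_comp, Fintype.sum_prod_type_right]
  rw [Finset.sum_congr rfl (g := fun _ => ∑ g, F g)]
  · rw [Finset.sum_const, Finset.card_univ, nsmul_eq_mul, Fintype.card_fun, Fintype.card_perm,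
      Fintype.card_fin, Fintype.card_fin]
    push_cast
    rfl
  · intro r _
    rw [← Equiv.sum_comp (Equiv.mulLeft (Gp (fun n => if h : n < K then r ⟨n, h⟩ else 1) K)) F]
    refine Finset.sum_congr rfl fun a _ => ?_
    congr 1
    rw [Gp_succ', Equiv.coe_mulLeft]
    congr 1
    apply Gp_congr
    intro i hi
    rw [dif_pos hi, show Fin.ofNat (K + 1) (i + 1) = Fin.succ ⟨i, hi⟩ by
      ext; simp; omega]
    rfl

theorem shift_val {m : ℕ} (n : ℕ) (y : Fin m) :
    ((((finRotate m) ^ n : Equiv.Perm (Fin m)) y : Fin m) : ℕ) = (y + n) % m := by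
  induction n with
  | zero => simp [Nat.mod_eq_of_lt y.2]
  | succ n ih =>
    have := y.neZero
    rw [pow_succ', Equiv.Perm.mul_apply, finRotate_apply, Fin.val_add, ih]
    simp [← add_assoc]

theorem shift_apply (K p : ℕ) (i : Fin (K + 1)) (x : Fin p) :
    ((finRotate ((K + 1) * p)) ^ p : Equiv.Perm _) (finProdFinEquiv (i, x)) =
      finProdFinEquiv (i + 1, x) := by
  ext
  rw [shift_val]
  simp only [finProdFinEquiv_apply_val]
  have hx := x.2
  have h2 : (i : ℕ) + 1 ≤ K + 1 := i.2
  rw [Fin.val_add_one]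
  split_ifs with h
  · subst h
    have : (x : ℕ) + p * (Fin.last K : ℕ) + p = x + (K + 1) * p := by simp; ring
    rw [this, Nat.add_mod_right, Nat.mod_eq_of_lt]
    · simp
    · nlinarith
  · have h3 : (i : ℕ) ≠ K := fun h' => h (Fin.ext h')
    have h4 : (i : ℕ) + 1 ≤ K := by omega
    rw [Nat.mod_eq_of_lt]
    · ring
    · nlinarith

def Phi {K p : ℕ} (σ : Fin (K + 1) → Equiv.Perm (Fin p)) : Equiv.Perm (Fin ((K + 1) * p)) :=
  finProdFinEquiv.permCongr (Equiv.prodShear (Equiv.refl _) σ)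

theorem Phi_apply {K p : ℕ} (σ : Fin (K + 1) → Equiv.Perm (Fin p)) (i : Fin (K + 1)) (x : Fin p) :
    Phi σ (finProdFinEquiv (i, x)) = finProdFinEquiv (i, σ i x) := by
  simp [Phi, Equiv.permCongr_apply]

theorem fpf_div {K p : ℕ} (i : Fin (K + 1)) (x : Fin p) :
    ((finProdFinEquiv (i, x) : Fin ((K + 1) * p)) : ℕ) / p = i := by
  have hp : 0 < p := x.pos
  rw [finProdFinEquiv_apply_val, Nat.add_mul_div_left _ _ hp, Nat.div_eq_of_lt x.2, zero_add]

theorem Phi_inj {K p : ℕ} : Function.Injective (Phi (K := K) (p := p)) := by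
  intro σ σ' h
  ext i x : 2
  have := congrArg (fun f => f (finProdFinEquiv (i, x))) h
  simp only [Phi_apply, finProdFinEquiv.injective.eq_iff, Prod.mk.injEq, true_and] at this
  exact this

theorem image_Phi (K p : ℕ) :
    (Finset.univ.filter fun σ : Equiv.Perm (Fin ((K + 1) * p)) =>
        ∀ x : Fin ((K + 1) * p), ((σ x : ℕ) / p = (x : ℕ) / p)) =
      Finset.univ.map ⟨Phi (K := K) (p := p), Phi_inj⟩ := by
  ext ρ
  simp only [Finset.mem_filter, Finset.mem_univ, true_and, Finset.mem_map,
    Function.Embedding.coeFn_mk]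
  constructor
  · intro h
    have hc : ∀ i x, ∃ y, ρ (finProdFinEquiv (i, x)) = finProdFinEquiv (i, y) := by
      intro i x
      obtain ⟨⟨j, y⟩, hj⟩ := finProdFinEquiv.surjective (ρ (finProdFinEquiv (i, x)))
      have := h (finProdFinEquiv (i, x))
      rw [← hj, fpf_div, fpf_div] at this
      refine ⟨y, ?_⟩
      rw [← hj, Fin.ext this]
    choose f hf using hc
    have hinj : ∀ i, Function.Injective (f i) := by
      intro i x y hxy
      have : ρ (finProdFinEquiv (i, x)) = ρ (finProdFinEquiv (i, y)) := by rw [hf, hf, hxy]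
      simpa using this
    refine ⟨fun i => Equiv.ofBijective (f i) (Finite.injective_iff_bijective.1 (hinj i)), ?_⟩
    ext y : 1
    obtain ⟨⟨i, x⟩, rfl⟩ := finProdFinEquiv.surjective y
    rw [Phi_apply, hf]; rfl
  · rintro ⟨σ, rfl⟩ y
    obtain ⟨⟨i, x⟩, rfl⟩ := finProdFinEquiv.surjective y
    rw [Phi_apply, fpf_div, fpf_div]

/-- for `m = kp`, blocks `Cᵢ = {(i−1)p+1,…,ip}` (here 0-based:
the block of `x` is `x / p`), `H ≤ S_m` the subgroup of permutations preserving
each block, and `σ₀` the shift by `p`, one has, for every `λ ⊢ m`: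
`(1/|H|) Σ_{σ ∈ σ₀H} χ^λ(σ) = Σ_{μ ⊢ p} (1/z_μ) χ^λ_{kμ}`. -/
theorem coset_character_sum_eq_partition_sum (k p : ℕ) (hk : 2 ≤ k) (hp : 1 ≤ p)
    (P : Partition) (hP : P.size = k * p) :
    (1 / ((Finset.univ.filter fun σ : Equiv.Perm (Fin (k * p)) =>
        ∀ x : Fin (k * p), ((σ x : ℕ) / p = (x : ℕ) / p)).card : ℚ)) *
      ∑ σ ∈ (Finset.univ.filter fun σ : Equiv.Perm (Fin (k * p)) =>
          ∀ x : Fin (k * p), ((σ x : ℕ) / p = (x : ℕ) / p)),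
        (chiPerm P (shiftPerm (k * p) p * σ) : ℚ) =
    ∑ μ : Nat.Partition p, (1 / (zpart μ.parts : ℚ)) *
      (chi P (μ.parts.map fun x => k * x) : ℚ) := by
  obtain ⟨K, rfl⟩ : ∃ K, k = K + 1 := ⟨k - 1, by omega⟩
  rw [image_Phi, Finset.card_map, Finset.sum_map, Finset.card_univ, Fintype.card_fun,
    Fintype.card_perm, Fintype.card_fin, Fintype.card_fin]
  have hterm : ∀ σ : Fin (K + 1) → Equiv.Perm (Fin p),
      (chiPerm P (shiftPerm ((K + 1) * p) p * Phi σ) : ℚ) =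
      (chi P ((ft (Gp (fun n => σ (Fin.ofNat (K + 1) n)) (K + 1))).map
        (fun x => (K + 1) * x)) : ℚ) := by
    intro σ
    rw [← ft_twist (shiftPerm ((K + 1) * p) p * Phi σ) σ]
    · rw [chiPerm, ft, Fintype.card_fin]
    · intro i x
      rw [Equiv.Perm.mul_apply, Phi_apply]
      exact shift_apply K p i (σ i x)
  simp only [Function.Embedding.coeFn_mk, hterm]
  rw [sum_Gp K p (fun g => (chi P ((ft g).map (fun x => (K + 1) * x)) : ℚ)),
    sum_ft p (fun m => (chi P (m.map (fun x => (K + 1) * x)) : ℚ))]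
  have hf : (p.factorial : ℚ) ≠ 0 := by exact_mod_cast p.factorial_ne_zero
  push_cast
  rw [← mul_assoc, ← mul_assoc, mul_assoc (1 / _), ← pow_succ,
    one_div_mul_cancel (pow_ne_zero _ hf), one_mul]

end RimHookPaper
end
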